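/- Let γ > 0, 1 < α < 2, p > 1, a > 0, b > 0, and let f be locally integrable on [0,∞). Suppose w ∈ C¹([0,∞)), w ≢ 0, the function t ↦ ₀I_t^{2−α}(w(s) − w'(0)s − w(0)) is in AC²([0,T]) for every T > 0, and for almost every t ≥ 0 one has (₀D_t^α w)(t) + a·w(t) = (₀I_t^γ f)(t) and f(t) ≥ b·|w(t)|^p. If γ ≥ α/2, α + γ ≤ 2, and w'(0) = 0, then liminf_{t→+∞} t^{1−γ}·w(t) > 0. -/

import Mathlib

/-!
Write `g_σ(x) = x ^ (σ - 1) / Γ(σ)` and let `*` be convolution on `[0, t]`. Convolving the equation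
with `g_α` turns it into the Volterra equation `w + a g_α * w = w(0) + g_{α+γ} * f`
(`caputo_volterra`), whose unique solution is `w = w(0) (1 - a k_1) + k_γ * f`
(`volterra_solution`), with the Mittag-Leffler kernel `k_γ = ∑ (-a) ^ n g_{(n+1)α+γ}`.

Two facts about the kernels finish the proof. First, `k_γ ≥ 0` as soon as `γ ≥ α / 2`
(`mlKer_bounds`): the Laplace transform of `a k_γ` is `s ^ (-(γ - α/2)) (1/x - x/(x ^ 2 + a))` with
`x = s ^ (α/2)`, which is completely monotone since `1/x - x/(x ^ 2 + a)` is the Laplace transform of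
`1 - cos (√a t)` and `s ^ (α/2)` is a Bernstein function. Second, `g_γ - a k_γ = O(1/t)`
(`mlKer_decay`): the transform of this difference is `z ^ (α-γ) / (z ^ α + a)`, whose derivative is
integrable along the imaginary axis, so Fourier inversion bounds `t (g_γ(t) - a k_γ(t))`.
Taking `γ = 1` in the second fact gives `1 - a k_1(t) = O(1/t)`.

Since `f ≥ b |w| ^ p ≥ 0` and `w` is not identically zero, `I = ∫₀ᴹ f > 0` for some `M`. Discarding
the part of `k_γ * f` over `[M, t]` leaves
`w(t) ≥ (g_γ(t) - O(1/t)) I / a - O(1/t)`. As `γ > 0`, multiplication by `t ^ (1-γ)` shows that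
the lower limit is at least `I / (a Γ(γ)) > 0`.
-/

open MeasureTheory Filter

/-- Riemann–Liouville fractional integral of order `σ` based at `0`:
`(₀I_t^σ f)(t) = (1/Γ(σ)) ∫₀ᵗ (t−s)^{σ−1} f(s) ds`. -/
noncomputable def rlInt (σ : ℝ) (f : ℝ → ℝ) (t : ℝ) : ℝ :=
  (1 / Real.Gamma σ) * ∫ s in (0:ℝ)..t, (t - s) ^ (σ - 1) * f s

/-- The function whose second derivative is the (left) Caputo derivative of order `α ∈ (1,2]`:
for `α < 2` it is `₀I_t^{2−α}(w(s) − w'(0)·s − w(0))`, and for `α = 2` it is `w` itself. -/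
noncomputable def capKernel (α : ℝ) (w : ℝ → ℝ) : ℝ → ℝ :=
  if α = 2 then w else rlInt (2 - α) (fun s => w s - deriv w 0 * s - w 0)

/-- Left Caputo fractional derivative of order `α ∈ (1,2]`:
`(₀D_t^α w)(t) = (d²/dt²)[ ₀I_t^{2−α}(w(s) − w'(0)s − w(0)) ](t)` (second derivative of `w` when `α = 2`). -/
noncomputable def caputoD (α : ℝ) (w : ℝ → ℝ) : ℝ → ℝ :=
  deriv (deriv (capKernel α w))

/-- `g ∈ AC²([0,T])`: `g` is differentiable on `[0,T]`, its second derivative is integrable,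
and `g'` is the integral of `g''` (i.e. `g'` is absolutely continuous). -/
def AC2On (g : ℝ → ℝ) (T : ℝ) : Prop :=
  (∀ t ∈ Set.Icc (0:ℝ) T, DifferentiableAt ℝ g t) ∧
  IntervalIntegrable (deriv (deriv g)) volume 0 T ∧
  ∀ t ∈ Set.Icc (0:ℝ) T, deriv g t = deriv g 0 + ∫ s in (0:ℝ)..t, deriv (deriv g) s

/-! ### Complete monotonicity and positivity of inverse Laplace transforms -/

/-- Complete monotonicity on `(0, ∞)` up to order `n`: `f ≥ 0`, `-f' ≥ 0`, `f'' ≥ 0`, …, with the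
derivatives given as witnesses. A function is completely monotone when `CMn n f` holds for all `n`.
The recursion keeps the sign in the witness: the next function is `g = -f'`. -/
def CMn : ℕ → (ℝ → ℝ) → Prop
  | 0, f => ∀ x > 0, 0 ≤ f x
  | n + 1, f => (∀ x > 0, 0 ≤ f x) ∧ ∃ g : ℝ → ℝ, (∀ x > 0, HasDerivAt f (-(g x)) x) ∧ CMn n g

lemma CMn.nonneg {n : ℕ} {f : ℝ → ℝ} (h : CMn n f) : ∀ x > 0, 0 ≤ f x := by
  cases n with
  | zero => exact h
  | succ n => exact h.1

lemma CMn.of_succ {n : ℕ} : ∀ {f : ℝ → ℝ}, CMn (n + 1) f → CMn n f := by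
  induction n with
  | zero => exact fun h => h.1
  | succ n ih => exact fun ⟨h0, g, hg, hn⟩ => ⟨h0, g, hg, ih hn⟩

lemma CMn.congr {n : ℕ} {f g : ℝ → ℝ} (hf : CMn n f) (h : ∀ x > 0, f x = g x) : CMn n g := by
  cases n with
  | zero => exact fun x hx => h x hx ▸ hf x hx
  | succ n =>
    obtain ⟨h0, f', hf', hn⟩ := hf
    refine ⟨fun x hx => h x hx ▸ h0 x hx, f', fun x hx => ?_, hn⟩
    refine (hf' x hx).congr_of_eventuallyEq ?_
    filter_upwards [lt_mem_nhds hx] with y hy using (h y hy).symm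

lemma CMn.add {n : ℕ} : ∀ {f g : ℝ → ℝ}, CMn n f → CMn n g → CMn n (fun x => f x + g x) := by
  induction n with
  | zero => exact fun hf hg x hx => add_nonneg (hf x hx) (hg x hx)
  | succ n ih =>
    rintro f g ⟨h0, f', hf', hn⟩ ⟨k0, g', hg', kn⟩
    refine ⟨fun x hx => add_nonneg (h0 x hx) (k0 x hx), _, fun x hx => ?_, ih hn kn⟩
    exact ((hf' x hx).add (hg' x hx)).congr_deriv (by ring)

lemma CMn.mul {n : ℕ} : ∀ {f g : ℝ → ℝ}, CMn n f → CMn n g → CMn n (fun x => f x * g x) := by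
  induction n with
  | zero => exact fun hf hg x hx => mul_nonneg (hf x hx) (hg x hx)
  | succ n ih =>
    intro f g hf hg
    have hf1 := hf.of_succ
    have hg1 := hg.of_succ
    obtain ⟨h0, f', hf', hn⟩ := hf
    obtain ⟨k0, g', hg', kn⟩ := hg
    refine ⟨fun x hx => mul_nonneg (h0 x hx) (k0 x hx), _, fun x hx => ?_,
      (ih hn hg1).add (ih hf1 kn)⟩
    exact ((hf' x hx).mul (hg' x hx)).congr_deriv (by ring)

/-- `G ∘ h` is completely monotone when `G` is and `h > 0` has a completely monotone derivative
(that is, `h` is a Bernstein function). -/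
lemma CMn.comp {n : ℕ} {h h' : ℝ → ℝ} (hpos : ∀ x > 0, 0 < h x)
    (hd : ∀ x > 0, HasDerivAt h (h' x) x) (hh' : CMn n h') :
    ∀ {G : ℝ → ℝ}, CMn n G → CMn n (fun x => G (h x)) := by
  induction n with
  | zero => exact fun hG x hx => hG _ (hpos x hx)
  | succ n ih =>
    rintro G ⟨h0, G', hG', hn⟩
    refine ⟨fun x hx => h0 _ (hpos x hx), _, fun x hx => ?_, (ih hh'.of_succ hn).mul hh'.of_succ⟩
    exact ((hG' _ (hpos x hx)).comp x (hd x hx)).congr_deriv (by ring)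

lemma CMn_rpow (n : ℕ) : ∀ {c δ : ℝ}, 0 ≤ c → 0 ≤ δ → CMn n (fun x => c * x ^ (-δ)) := by
  induction n with
  | zero => exact fun hc _ x hx => mul_nonneg hc (Real.rpow_nonneg hx.le _)
  | succ n ih =>
    intro c δ hc hδ
    refine ⟨fun x hx => mul_nonneg hc (Real.rpow_nonneg hx.le _), _, fun x hx => ?_,
      ih (mul_nonneg hc hδ) (by linarith : 0 ≤ δ + 1)⟩
    refine ((Real.hasDerivAt_rpow_const (p := -δ) (Or.inl hx.ne')).const_mul c).congr_deriv ?_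
    rw [show -(δ + 1) = -δ - 1 by ring]
    ring

lemma CMn.antitone {n : ℕ} {f : ℝ → ℝ} (hf : CMn (n + 1) f) {x y : ℝ} (hx : 0 < x) (hxy : x ≤ y) :
    f y ≤ f x := by
  obtain ⟨_, g, hg, hn⟩ := hf
  refine antitoneOn_of_hasDerivWithinAt_nonpos (f := f) (f' := fun x => -g x) (convex_Ioi (0:ℝ))
    (fun x hx => (hg x hx).continuousAt.continuousWithinAt) ?_ ?_ hx (hx.trans_le hxy) hxy
  · intro x hx
    rw [interior_Ioi] at hx
    exact (hg x hx).hasDerivWithinAt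
  · intro x hx
    rw [interior_Ioi] at hx
    simpa using hn.nonneg x hx

/-- Differencing with step `1` costs one order: `f x - f (x + 1)` is nonnegative since `f` decreases,
and its negated derivative is the same expression for `-f'`. -/
lemma CMn.diff {n : ℕ} : ∀ {f : ℝ → ℝ}, CMn (n + 1) f → CMn n (fun x => f x - f (x + 1)) := by
  induction n with
  | zero => exact fun hf x hx => sub_nonneg.2 (hf.antitone hx (by linarith))
  | succ n ih =>
    intro f hf
    have hanti : ∀ x > 0, 0 ≤ f x - f (x + 1) := fun x hx =>
      sub_nonneg.2 (hf.antitone hx (by linarith))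
    obtain ⟨_, g, hg, hn⟩ := hf
    refine ⟨hanti, _, fun x hx => ?_, ih hn⟩
    exact ((hg x hx).sub ((hg (x + 1) (by linarith)).comp_add_const x 1)).congr_deriv (by ring)

/-- For `m = 0` the function is `1 / x + e * Re (1 / (x + i c))`, the Laplace transform of the
nonnegative function `1 + e * cos (c t)`. The family indexed by `m` is the orbit under `-d/dx`, which
is what makes the induction on `n` work. -/
lemma CMn_resolvent (c e : ℝ) (he : |e| = 1) (n : ℕ) : ∀ m : ℕ,
    CMn n (fun x : ℝ => (m.factorial : ℝ) *
      ((x ^ (m + 1))⁻¹ + e * ((((x : ℂ) + c * Complex.I) ^ (m + 1))⁻¹).re)) := by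
  have hnn : ∀ m : ℕ, ∀ x : ℝ, 0 < x → (0:ℝ) ≤ (m.factorial : ℝ) *
      ((x ^ (m + 1))⁻¹ + e * ((((x : ℂ) + c * Complex.I) ^ (m + 1))⁻¹).re) := by
    intro m x hx
    refine mul_nonneg (by positivity) ?_
    have h1 : |e * ((((x : ℂ) + c * Complex.I) ^ (m + 1))⁻¹).re| ≤ (x ^ (m + 1))⁻¹ := by
      rw [abs_mul, he, one_mul]
      refine (Complex.abs_re_le_norm _).trans ?_
      rw [norm_inv, norm_pow]
      have : x ≤ ‖(x : ℂ) + c * Complex.I‖ := by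
        refine le_trans ?_ (Complex.abs_re_le_norm _)
        simp [le_abs_self]
      gcongr
    linarith [(abs_le.1 h1).1]
  induction n with
  | zero => exact fun m => hnn m
  | succ n ih =>
    refine fun m => ⟨hnn m, _, fun x hx => ?_, ih (m + 1)⟩
    have hne : (x : ℂ) + c * Complex.I ≠ 0 := by
      intro h
      have := congrArg Complex.re h
      simp at this
      exact hx.ne' this
    have h1 : HasDerivAt (fun x : ℝ => (x ^ (m + 1))⁻¹) (-((m + 1) * (x ^ (m + 2))⁻¹)) x := by
      refine ((hasDerivAt_pow (m + 1) x).inv (pow_ne_zero _ hx.ne')).congr_deriv ?_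
      push_cast
      field_simp
      ring
    have h2 : HasDerivAt (fun z : ℂ => (z ^ (m + 1))⁻¹)
        (-((m + 1) * (((x : ℂ) + c * Complex.I) ^ (m + 2))⁻¹)) ((x : ℂ) + c * Complex.I) := by
      refine ((hasDerivAt_pow (m + 1) ((x : ℂ) + c * Complex.I)).inv
        (pow_ne_zero _ hne)).congr_deriv ?_
      push_cast
      field_simp
      ring
    have h3 := (HasDerivAt.comp_add_const (x : ℂ) (c * Complex.I) h2).real_of_complex
    refine ((h1.add (h3.const_mul e)).const_mul (m.factorial : ℝ)).congr_deriv ?_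
    rw [Nat.factorial_succ, Complex.neg_re]
    have : (((m : ℂ) + 1) * (((x : ℂ) + c * Complex.I) ^ (m + 2))⁻¹).re
        = (m + 1) * ((((x : ℂ) + c * Complex.I) ^ (m + 2))⁻¹).re := by
      rw [← Complex.re_ofReal_mul]; push_cast; rfl
    rw [this]
    push_cast
    ring

/-- If `φ` has completely monotone Laplace transform `F`, then `φ` integrates nonnegatively against
`exp (-s t) * (1 - exp (-t)) ^ j`: each factor `1 - exp (-t)` replaces `F s` by `F s - F (s + 1)`,
which is again completely monotone. -/
lemma laplace_weight_nonneg (j : ℕ) {s₀ : ℝ} (hs₀ : 0 < s₀) : ∀ {φ F : ℝ → ℝ},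
    (∀ n, CMn n F) →
    (∀ s ≥ s₀, IntegrableOn (fun t => Real.exp (-s * t) * φ t) (Set.Ioi 0)) →
    (∀ s ≥ s₀, ∫ t in Set.Ioi 0, Real.exp (-s * t) * φ t = F s) →
    ∀ s ≥ s₀, 0 ≤ ∫ t in Set.Ioi 0, Real.exp (-s * t) * ((1 - Real.exp (-t)) ^ j * φ t) := by
  induction j with
  | zero =>
    intro φ F hF _ hL s hs
    simp only [pow_zero, one_mul, hL s hs]
    exact (hF 0).nonneg s (by linarith)
  | succ j ih =>
    intro φ F hF hi hL s hs
    have key : ∀ s t : ℝ, Real.exp (-s * t) * ((1 - Real.exp (-t)) * φ t)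
        = Real.exp (-s * t) * φ t - Real.exp (-(s + 1) * t) * φ t := by
      intro s t
      rw [show -(s + 1) * t = -s * t + -t by ring, Real.exp_add]
      ring
    have h := ih (φ := fun t => (1 - Real.exp (-t)) * φ t) (F := fun s => F s - F (s + 1))
      (fun n => (hF (n + 1)).diff) ?_ ?_ s hs
    · simpa only [pow_succ, mul_assoc] using h
    · intro s hs
      simp only [key]
      exact (hi s hs).sub (hi (s + 1) (by linarith))
    · intro s hs
      simp only [key]
      rw [integral_sub (hi s hs) (hi (s + 1) (by linarith)), hL s hs, hL (s + 1) (by linarith)]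

/-- The easy half of Bernstein's theorem: a continuous function with completely monotone Laplace
transform is nonnegative. In the variable `x = exp (-t)` the weights of `laplace_weight_nonneg`
contain all `x ^ i * (1 - x) ^ j`, so by Bernstein polynomial approximation `φ` integrates
nonnegatively against every nonnegative continuous function of `x`, in particular against a tent
located where `φ` would be negative. -/
lemma nonneg_of_laplace_CM {φ F : ℝ → ℝ} {s₀ : ℝ} (hs₀ : 0 < s₀) (hF : ∀ n, CMn n F)
    (hi : ∀ s ≥ s₀, IntegrableOn (fun t => Real.exp (-s * t) * φ t) (Set.Ioi 0))
    (hL : ∀ s ≥ s₀, ∫ t in Set.Ioi 0, Real.exp (-s * t) * φ t = F s)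
    (hc : ContinuousOn φ (Set.Ioi 0)) : ∀ t > 0, 0 ≤ φ t := by
  -- extension of `t ↦ exp (-t)` to a map into the unit interval
  let E : ℝ → unitInterval := fun t => Set.projIcc 0 1 zero_le_one (Real.exp (-t))
  have hE : ∀ t > 0, ((E t : unitInterval) : ℝ) = Real.exp (-t) := by
    intro t ht
    have : Real.exp (-t) ∈ Set.Icc (0:ℝ) 1 :=
      ⟨(Real.exp_pos _).le, Real.exp_le_one_iff.2 (by linarith)⟩
    simp only [E, Set.projIcc_of_mem zero_le_one this]
  have hEc : Continuous E := continuous_projIcc.comp (by fun_prop)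
  have hint : ∀ ψ : C(unitInterval, ℝ),
      IntegrableOn (fun t => ψ (E t) * (Real.exp (-s₀ * t) * φ t)) (Set.Ioi 0) := by
    intro ψ
    refine (hi s₀ le_rfl).bdd_mul (c := ‖ψ‖) (by fun_prop) (ae_of_all _ fun t => ψ.norm_coe_le_norm _)
  have hber : ∀ n ν : ℕ, 0 ≤ ∫ t in Set.Ioi 0, bernstein n ν (E t) * (Real.exp (-s₀ * t) * φ t) := by
    intro n ν
    have h := laplace_weight_nonneg (n - ν) hs₀ hF hi hL (s₀ + ν) (by simp)
    have h2 : ∫ t in Set.Ioi 0, bernstein n ν (E t) * (Real.exp (-s₀ * t) * φ t) =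
        (n.choose ν : ℝ) * ∫ t in Set.Ioi 0,
          Real.exp (-(s₀ + ν) * t) * ((1 - Real.exp (-t)) ^ (n - ν) * φ t) := by
      rw [← integral_const_mul]
      refine setIntegral_congr_fun measurableSet_Ioi fun t ht => ?_
      simp only [bernstein_apply, hE t ht]
      rw [show -(s₀ + ν) * t = -s₀ * t + ν * (-t) by ring, Real.exp_add, Real.exp_nat_mul]
      ring
    rw [h2]
    positivity
  have happ : ∀ ψ : C(unitInterval, ℝ), (∀ x, 0 ≤ ψ x) → ∀ n,
      0 ≤ ∫ t in Set.Ioi 0, bernsteinApproximation n ψ (E t) * (Real.exp (-s₀ * t) * φ t) := by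
    intro ψ hψ n
    simp only [bernsteinApproximation.apply, Finset.sum_mul, smul_eq_mul]
    rw [integral_finsetSum]
    · refine Finset.sum_nonneg fun k _ => ?_
      have : ∀ t, bernstein n k (E t) * ψ (bernstein.z k) * (Real.exp (-s₀ * t) * φ t)
        = ψ (bernstein.z k) * (bernstein n k (E t) * (Real.exp (-s₀ * t) * φ t)) := fun t => by ring
      simp only [this]
      rw [integral_const_mul]
      exact mul_nonneg (hψ _) (hber _ _)
    · intro k _
      have := (hint (bernstein n k)).const_mul (ψ (bernstein.z k))
      refine this.congr (ae_of_all _ fun t => by ring)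
  have hpos : ∀ ψ : C(unitInterval, ℝ), (∀ x, 0 ≤ ψ x) →
      0 ≤ ∫ t in Set.Ioi 0, ψ (E t) * (Real.exp (-s₀ * t) * φ t) := by
    intro ψ hψ
    refine ge_of_tendsto' (f := fun n => ∫ t in Set.Ioi 0,
      bernsteinApproximation n ψ (E t) * (Real.exp (-s₀ * t) * φ t)) (x := atTop) ?_ (happ ψ hψ)
    have h0 : Tendsto (fun n => ‖bernsteinApproximation n ψ - ψ‖ *
        ∫ t in Set.Ioi 0, ‖Real.exp (-s₀ * t) * φ t‖) atTop (nhds 0) := by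
      have := (tendsto_iff_norm_sub_tendsto_zero.1 (bernsteinApproximation_uniform ψ))
      simpa using this.mul_const (∫ t in Set.Ioi 0, ‖Real.exp (-s₀ * t) * φ t‖)
    rw [tendsto_iff_norm_sub_tendsto_zero]
    refine squeeze_zero (fun _ => norm_nonneg _) (fun n => ?_) h0
    rw [← integral_sub (hint _) (hint _), ← integral_const_mul]
    refine norm_integral_le_of_norm_le ((hi s₀ le_rfl).norm.const_mul _) (ae_of_all _ fun t => ?_)
    rw [← sub_mul, norm_mul]
    gcongr
    exact (bernsteinApproximation n ψ - ψ).norm_coe_le_norm (E t)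
  by_contra! hneg
  obtain ⟨t₀, ht₀, hφ⟩ := hneg
  -- a tent function of `exp (-t)` whose support lies where `φ < 0`
  have hev : ∀ᶠ x in nhds (Real.exp (-t₀)), 0 < x ∧ x < 1 ∧ φ (-Real.log x) < 0 := by
    refine (lt_mem_nhds (Real.exp_pos _)).and ((gt_mem_nhds (Real.exp_lt_one_iff.2 (by linarith))).and ?_)
    have hc' : ContinuousAt (fun x => φ (-Real.log x)) (Real.exp (-t₀)) := by
      refine ContinuousAt.comp (f := fun x => - Real.log x) (g := φ) ?_
        (Real.continuousAt_log (Real.exp_pos _).ne').neg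
      rw [Real.log_exp, neg_neg]
      exact hc.continuousAt (Ioi_mem_nhds ht₀)
    refine hc'.eventually_lt_const ?_
    simpa using hφ
  obtain ⟨δ, hδ, hball⟩ := Metric.eventually_nhds_iff.1 hev
  let ψ : C(unitInterval, ℝ) := ⟨fun x => max 0 (δ - |(x : ℝ) - Real.exp (-t₀)|), by fun_prop⟩
  have hle : ∀ t > 0, ψ (E t) * (Real.exp (-s₀ * t) * φ t) ≤ 0 := by
    intro t ht
    simp only [ψ, ContinuousMap.coe_mk, hE t ht]
    rcases lt_or_ge |Real.exp (-t) - Real.exp (-t₀)| δ with h | h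
    · have := (hball (y := Real.exp (-t)) h).2.2
      rw [Real.log_exp, neg_neg] at this
      exact mul_nonpos_of_nonneg_of_nonpos (le_max_left _ _)
        (mul_nonpos_of_nonneg_of_nonpos (Real.exp_pos _).le this.le)
    · rw [max_eq_left (by linarith), zero_mul]
  have hzero : ∫ t in Set.Ioi 0, -(ψ (E t) * (Real.exp (-s₀ * t) * φ t)) = 0 := by
    refine le_antisymm ?_ (setIntegral_nonneg measurableSet_Ioi fun t ht => by linarith [hle t ht])
    rw [integral_neg]
    linarith [hpos ψ (fun x => le_max_left _ _)]
  have hae := (setIntegral_eq_zero_iff_of_nonneg_ae ((ae_restrict_mem measurableSet_Ioi).mono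
    fun t ht => by simpa using hle t ht) (hint ψ).neg).1 hzero
  -- the integrand is strictly negative near `t₀`
  have hcont : ContinuousOn (fun t => -(ψ (E t) * (Real.exp (-s₀ * t) * φ t))) (Set.Ioi 0) := by
    refine ContinuousOn.neg (ContinuousOn.mul (by fun_prop) (ContinuousOn.mul (by fun_prop) hc))
  have heq := Measure.eqOn_open_of_ae_eq hae isOpen_Ioi hcont continuousOn_const ht₀
  simp only [Pi.neg_apply, ψ, ContinuousMap.coe_mk, hE t₀ ht₀, sub_self, abs_zero, sub_zero,
    max_eq_right hδ.le, Pi.zero_apply, neg_eq_zero] at heq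
  have := mul_neg_of_pos_of_neg hδ (mul_neg_of_pos_of_neg (Real.exp_pos (-s₀ * t₀)) hφ)
  exact this.ne heq

/-! ### Fractional kernels and the Mittag-Leffler kernel -/

/-- The Riemann–Liouville kernel `g_σ(x) = x ^ (σ - 1) / Γ(σ)`. Only its values for `x ≥ 0` are
used. -/
noncomputable def fracKer (σ x : ℝ) : ℝ := x ^ (σ - 1) / Real.Gamma σ

/-- The one-sided convolution `(K * f)(t) = ∫₀ᵗ K (t - s) f s ds`. -/
noncomputable def cv (K f : ℝ → ℝ) (t : ℝ) : ℝ := ∫ s in (0:ℝ)..t, K (t - s) * f s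

lemma measurable_fracKer (σ : ℝ) : Measurable (fracKer σ) := by
  unfold fracKer; fun_prop

lemma fracKer_pos {σ x : ℝ} (hσ : 0 < σ) (hx : 0 < x) : 0 < fracKer σ x :=
  div_pos (Real.rpow_pos_of_pos hx _) (Real.Gamma_pos_of_pos hσ)

lemma fracKer_nonneg {σ x : ℝ} (hσ : 0 < σ) (hx : 0 ≤ x) : 0 ≤ fracKer σ x :=
  div_nonneg (Real.rpow_nonneg hx _) (Real.Gamma_pos_of_pos hσ).le

lemma fracKer_mono {σ x y : ℝ} (hσ : 1 ≤ σ) (hx : 0 ≤ x) (hxy : x ≤ y) :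
    fracKer σ x ≤ fracKer σ y := by
  have := Real.Gamma_pos_of_pos (show 0 < σ by linarith)
  have : 0 ≤ σ - 1 := by linarith
  unfold fracKer
  gcongr

lemma fracKer_one (x : ℝ) : fracKer 1 x = 1 := by simp [fracKer]

lemma continuous_fracKer {σ : ℝ} (hσ : 1 ≤ σ) : Continuous (fracKer σ) :=
  (Real.continuous_rpow_const (by linarith)).div_const _

lemma fracKer_conv_aux {σ τ x : ℝ} (hσ : 0 < σ) (hτ : 0 < τ) (hx : 0 < x) :
    ∫ s in (0:ℝ)..x, fracKer σ (x - s) * fracKer τ s = fracKer (σ + τ) x := by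
  have h1 := Complex.betaIntegral_scaled (τ : ℂ) (σ : ℂ) hx
  have h2 := Complex.Gamma_mul_Gamma_eq_betaIntegral (s := (τ : ℂ)) (t := (σ : ℂ))
    (by simpa) (by simpa)
  have hGσ := Real.Gamma_pos_of_pos hσ
  have hGτ := Real.Gamma_pos_of_pos hτ
  have hG := Real.Gamma_pos_of_pos (add_pos hτ hσ)
  have h3 : ∫ s in (0:ℝ)..x, ((s ^ (τ - 1) * (x - s) ^ (σ - 1) : ℝ) : ℂ)
      = ∫ s in (0:ℝ)..x, (s : ℂ) ^ ((τ : ℂ) - 1) * ((x : ℂ) - s) ^ ((σ : ℂ) - 1) := by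
    refine intervalIntegral.integral_congr fun s hs => ?_
    rw [Set.uIcc_of_le hx.le] at hs
    simp only [Complex.ofReal_mul]
    rw [Complex.ofReal_cpow hs.1, Complex.ofReal_cpow (by linarith [hs.2])]
    push_cast
    rfl
  rw [intervalIntegral.integral_ofReal, h1] at h3
  have h4 : ∫ s in (0:ℝ)..x, s ^ (τ - 1) * (x - s) ^ (σ - 1)
      = x ^ (τ + σ - 1) * (Real.Gamma τ * Real.Gamma σ / Real.Gamma (τ + σ)) := by
    have h5 : Complex.betaIntegral τ σ
        = ((Real.Gamma τ * Real.Gamma σ / Real.Gamma (τ + σ) : ℝ) : ℂ) := by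
      have : (Real.Gamma (τ + σ) : ℂ) ≠ 0 := by exact_mod_cast hG.ne'
      push_cast
      rw [eq_div_iff this, ← Complex.Gamma_ofReal, ← Complex.Gamma_ofReal, ← Complex.Gamma_ofReal,
        h2]
      push_cast
      ring
    rw [h5] at h3
    have h6 : ((x : ℂ) ^ ((τ : ℂ) + σ - 1)) = ((x ^ (τ + σ - 1) : ℝ) : ℂ) := by
      rw [Complex.ofReal_cpow hx.le]
      push_cast
      rfl
    rw [h6] at h3
    exact_mod_cast h3
  have h7 : ∫ s in (0:ℝ)..x, fracKer σ (x - s) * fracKer τ s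
      = ∫ s in (0:ℝ)..x, (Real.Gamma τ * Real.Gamma σ)⁻¹ * (s ^ (τ - 1) * (x - s) ^ (σ - 1)) := by
    congr 1
    ext s
    unfold fracKer
    field_simp
  rw [h7, intervalIntegral.integral_const_mul, h4, fracKer, add_comm σ τ]
  field_simp

/-- The semigroup law `g_σ * g_τ = g_{σ+τ}`, a form of the Beta integral. Integrability comes for free,
because the value of the integral is nonzero. -/
lemma fracKer_conv {σ τ x : ℝ} (hσ : 0 < σ) (hτ : 0 < τ) (hx : 0 < x) :
    IntervalIntegrable (fun s => fracKer σ (x - s) * fracKer τ s) volume 0 x ∧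
    ∫ s in (0:ℝ)..x, fracKer σ (x - s) * fracKer τ s = fracKer (σ + τ) x := by
  have h := fracKer_conv_aux hσ hτ hx
  refine ⟨intervalIntegral.intervalIntegrable_of_integral_ne_zero ?_, h⟩
  rw [h]
  exact (fracKer_pos (add_pos hσ hτ) hx).ne'

/-- Associativity `K₁ * (K₂ * f) = (K₁ * K₂) * f` by Fubini, where `K₃ = K₁ * K₂`. The bound on `K₃`
makes the double integral converge absolutely for every integrable `f`, even when `K₁` and `K₂` are
singular at `0`. -/
lemma cv_assoc {K₁ K₂ K₃ f : ℝ → ℝ} {t B : ℝ} (ht : 0 ≤ t)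
    (m₁ : Measurable K₁) (m₂ : Measurable K₂)
    (n₁ : ∀ x > 0, 0 ≤ K₁ x) (n₂ : ∀ x > 0, 0 ≤ K₂ x)
    (h₃ : ∀ x > 0, x ≤ t → IntervalIntegrable (fun s => K₁ (x - s) * K₂ s) volume 0 x ∧
      ∫ s in (0:ℝ)..x, K₁ (x - s) * K₂ s = K₃ x)
    (hB : ∀ x > 0, x ≤ t → |K₃ x| ≤ B)
    (hf : IntervalIntegrable f volume 0 t) :
    cv K₁ (cv K₂ f) t = cv K₃ f t := by
  have hf' : IntegrableOn f (Set.Ioo 0 t) :=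
    ((intervalIntegrable_iff_integrableOn_Ioo_of_le ht).1 hf)
  set μ : Measure ℝ := volume.restrict (Set.Ioo 0 t) with hμ
  let F : ℝ → ℝ → ℝ := fun s r => Set.indicator (Set.Ioi r) (fun s => K₁ (t - s) * K₂ (s - r)) s * f r
  have hK : ∀ r ∈ Set.Ioo 0 t, IntegrableOn (fun s => K₁ (t - s) * K₂ (s - r)) (Set.Ioo r t) ∧
      ∫ s in Set.Ioo r t, K₁ (t - s) * K₂ (s - r) = K₃ (t - r) := by
    intro r hr
    obtain ⟨hi, he⟩ := h₃ (t - r) (by linarith [hr.2]) (by linarith [hr.1])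
    have hi' := hi.comp_sub_right r
    have he' := intervalIntegral.integral_comp_sub_right (a := r) (b := t)
      (fun s => K₁ (t - r - s) * K₂ s) r
    simp only [sub_sub_sub_cancel_right, zero_add, sub_add_cancel, sub_self] at hi' he'
    rw [← integral_Ioc_eq_integral_Ioo, ← intervalIntegral.integral_of_le hr.2.le, he', he]
    exact ⟨(intervalIntegrable_iff_integrableOn_Ioo_of_le hr.2.le).1 hi', rfl⟩
  have hFr : ∀ r ∈ Set.Ioo 0 t, Integrable (fun s => F s r) μ ∧ ∫ s, F s r ∂μ = K₃ (t - r) * f r ∧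
      ∫ s, ‖F s r‖ ∂μ = K₃ (t - r) * ‖f r‖ := by
    intro r hr
    obtain ⟨hi, he⟩ := hK r hr
    have hset : Set.Ioi r ∩ Set.Ioo 0 t = Set.Ioo r t := by
      ext s; simp only [Set.mem_inter_iff, Set.mem_Ioi, Set.mem_Ioo]
      exact ⟨fun h => ⟨h.1, h.2.2⟩, fun h => ⟨h.1, hr.1.trans h.1, h.2⟩⟩
    have hind : Integrable ((Set.Ioi r).indicator fun s => K₁ (t - s) * K₂ (s - r)) μ := by
      rw [integrable_indicator_iff measurableSet_Ioi, IntegrableOn, hμ,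
        Measure.restrict_restrict measurableSet_Ioi, hset]
      exact hi
    have hval : ∫ s, (Set.Ioi r).indicator (fun s => K₁ (t - s) * K₂ (s - r)) s ∂μ = K₃ (t - r) := by
      rw [integral_indicator measurableSet_Ioi, hμ, Measure.restrict_restrict measurableSet_Ioi,
        hset, he]
    refine ⟨hind.mul_const _, ?_, ?_⟩
    · simp only [F]
      rw [integral_mul_const, hval]
    · simp only [F, norm_mul]
      rw [integral_mul_const, ← hval]
      congr 1
      refine integral_congr_ae ?_
      filter_upwards [ae_restrict_mem measurableSet_Ioo] with s hs
      rw [Real.norm_eq_abs, abs_of_nonneg]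
      by_cases h : r < s
      · simpa [h] using mul_nonneg (n₁ _ (sub_pos.2 hs.2)) (n₂ _ (sub_pos.2 h))
      · simp [h]
  have hFm : AEStronglyMeasurable (Function.uncurry F) (μ.prod μ) := by
    have h1 : Measurable fun p : ℝ × ℝ =>
        Set.indicator {p : ℝ × ℝ | p.2 < p.1} (fun p => K₁ (t - p.1) * K₂ (p.1 - p.2)) p := by
      refine Measurable.indicator ?_ (measurableSet_lt measurable_snd measurable_fst)
      fun_prop
    have h2 : AEStronglyMeasurable (fun p : ℝ × ℝ => f p.2) (μ.prod μ) :=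
      hf'.aestronglyMeasurable.comp_snd
    exact h1.aestronglyMeasurable.mul h2
  have hFint : Integrable (Function.uncurry F) (μ.prod μ) := by
    rw [integrable_prod_iff' hFm]
    constructor
    · filter_upwards [ae_restrict_mem measurableSet_Ioo] with r hr using (hFr r hr).1
    · refine (hf'.norm.const_mul B).mono' hFm.norm.prod_swap.integral_prod_right' ?_
      filter_upwards [ae_restrict_mem measurableSet_Ioo] with r hr
      have : ∫ s, ‖Function.uncurry F (s, r)‖ ∂μ = K₃ (t - r) * ‖f r‖ := (hFr r hr).2.2
      rw [this, norm_mul, norm_norm]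
      gcongr
      exact hB _ (by linarith [hr.2]) (by linarith [hr.1])
  have hswap := integral_integral_swap hFint
  have hL : cv K₁ (cv K₂ f) t = ∫ s, ∫ r, F s r ∂μ ∂μ := by
    rw [cv, intervalIntegral.integral_of_le ht, integral_Ioc_eq_integral_Ioo]
    refine setIntegral_congr_fun measurableSet_Ioo fun s hs => ?_
    have hset : Set.Iio s ∩ Set.Ioo 0 t = Set.Ioo 0 s := by
      ext r; simp only [Set.mem_inter_iff, Set.mem_Iio, Set.mem_Ioo]
      exact ⟨fun h => ⟨h.2.1, h.1⟩, fun h => ⟨h.2, h.1, h.2.trans hs.2⟩⟩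
    have : ∀ r, F s r = (Set.Iio s).indicator (fun r => K₁ (t - s) * (K₂ (s - r) * f r)) r := by
      intro r
      by_cases h : r < s <;> simp [F, h, mul_assoc]
    simp only [this]
    rw [integral_indicator measurableSet_Iio, hμ, Measure.restrict_restrict measurableSet_Iio,
      hset, integral_const_mul, cv, intervalIntegral.integral_of_le hs.1.le,
      integral_Ioc_eq_integral_Ioo]
  rw [hL, hswap, cv, intervalIntegral.integral_of_le ht, integral_Ioc_eq_integral_Ioo]
  exact setIntegral_congr_fun measurableSet_Ioo fun r hr => (hFr r hr).2.1

/-- The Mittag-Leffler kernel `k_γ(x) = x ^ (α + γ - 1) E_{α, α+γ}(-a x ^ α)`, written as the series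
`∑ (-a) ^ n g_{(n+1)α+γ}(x)`. Replacing `x` by `max x 0` extends it by zero to negative `x`, which
makes it continuous on the whole line. -/
noncomputable def mlKer (a α γ x : ℝ) : ℝ :=
  ∑' n : ℕ, (-a) ^ n * fracKer ((n + 1) * α + γ) (max x 0)

section ml
variable {a α γ : ℝ}

lemma mlKer_idx_one_lt (hα : 1 < α) (hγ : 0 < γ) (n : ℕ) : 1 < ((n : ℝ) + 1) * α + γ := by
  have : (0:ℝ) ≤ n := n.cast_nonneg
  nlinarith

lemma mlKer_summable (ha : 0 < a) (hα : 1 < α) (hγ : 0 < γ) {x : ℝ} (hx : 0 ≤ x) :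
    Summable fun n : ℕ => a ^ n * fracKer ((n + 1) * α + γ) x := by
  rw [← summable_nat_add_iff 1]
  refine Summable.of_nonneg_of_le (fun n => ?_) (fun n => ?_)
    (((Real.summable_pow_div_factorial (a * x ^ α)).mul_left (a * x ^ (2 * α + γ - 1))))
  · exact mul_nonneg (by positivity) (fracKer_nonneg
      (by linarith [mlKer_idx_one_lt hα hγ (n + 1)]) hx)
  · have hn : (0:ℝ) ≤ n := n.cast_nonneg
    have hidx := mlKer_idx_one_lt hα hγ (n + 1)
    push_cast at hidx ⊢
    have hG : (n.factorial : ℝ) ≤ Real.Gamma (((n : ℝ) + 1 + 1) * α + γ) := by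
      have h1 : (n.factorial : ℝ) ≤ (n + 1).factorial := by
        exact_mod_cast Nat.factorial_le (Nat.le_succ n)
      refine h1.trans ?_
      rw [← Real.Gamma_nat_eq_factorial]
      push_cast
      refine Real.Gamma_strictMonoOn_Ici.monotoneOn ?_ ?_ ?_
      · simp only [Set.mem_Ici]; linarith
      · simp only [Set.mem_Ici]; nlinarith
      · nlinarith
    have hfac : (0:ℝ) < n.factorial := by positivity
    rcases hx.eq_or_lt with rfl | hx
    · rw [fracKer, Real.zero_rpow (by linarith)]
      simp only [zero_div, mul_zero]
      positivity
    · have e1 : x ^ (((n : ℝ) + 1 + 1) * α + γ - 1) = x ^ (2 * α + γ - 1) * (x ^ α) ^ n := by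
        rw [← Real.rpow_mul_natCast hx.le, ← Real.rpow_add hx]
        congr 1
        ring
      rw [fracKer, e1]
      calc a ^ (n + 1) * (x ^ (2 * α + γ - 1) * (x ^ α) ^ n / Real.Gamma (((n : ℝ) + 1 + 1) * α + γ))
          ≤ a ^ (n + 1) * (x ^ (2 * α + γ - 1) * (x ^ α) ^ n / n.factorial) := by gcongr
        _ = _ := by rw [mul_pow]; ring

lemma mlKer_term_norm (ha : 0 < a) (hα : 1 < α) (hγ : 0 < γ) {x y : ℝ} (hxy : x ≤ y) (hy : 0 ≤ y)
    (n : ℕ) : ‖(-a) ^ n * fracKer ((n + 1) * α + γ) (max x 0)‖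
      ≤ a ^ n * fracKer ((n + 1) * α + γ) y := by
  have h := mlKer_idx_one_lt hα hγ n
  rw [norm_mul, norm_pow, norm_neg, Real.norm_of_nonneg ha.le,
    Real.norm_of_nonneg (fracKer_nonneg (by linarith) (le_max_right _ _))]
  gcongr
  exact fracKer_mono h.le (le_max_right _ _) (max_le hxy hy)

lemma continuous_mlKer (ha : 0 < a) (hα : 1 < α) (hγ : 0 < γ) : Continuous (mlKer a α γ) := by
  rw [continuous_iff_continuousAt]
  intro x
  have : ContinuousOn (mlKer a α γ) (Set.Iio (|x| + 1)) := by
    refine continuousOn_tsum (fun n => ?_) (mlKer_summable ha hα hγ (x := |x| + 1) (by positivity))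
      (fun n y hy => mlKer_term_norm ha hα hγ (le_of_lt hy) (by positivity) n)
    exact (continuous_const.mul ((continuous_fracKer (mlKer_idx_one_lt hα hγ n).le).comp
      (by fun_prop))).continuousOn
  exact this.continuousAt (Iio_mem_nhds (by linarith [le_abs_self x]))

lemma mlKer_hasSum (ha : 0 < a) (hα : 1 < α) (hγ : 0 < γ) (x : ℝ) :
    HasSum (fun n : ℕ => (-a) ^ n * fracKer ((n + 1) * α + γ) (max x 0)) (mlKer a α γ x) :=
  (Summable.of_norm_bounded (mlKer_summable ha hα hγ (x := |x|) (by positivity))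
    (mlKer_term_norm ha hα hγ (le_abs_self x) (by positivity))).hasSum

/-- `k_γ` solves `k + a g_α * k = g_{α+γ}`: convolution with `a g_α` shifts the defining series by one
term. -/
lemma mlKer_volterra (ha : 0 < a) (hα : 1 < α) (hγ : 0 < γ) {x : ℝ} (hx : 0 < x) :
    mlKer a α γ x + a * ∫ s in (0:ℝ)..x, fracKer α (x - s) * mlKer a α γ s
      = fracKer (α + γ) x := by
  have hsum := mlKer_hasSum ha hα hγ x
  rw [max_eq_left hx.le] at hsum
  have hint : HasSum (fun n : ℕ => ∫ s in (0:ℝ)..x,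
      fracKer α (x - s) * ((-a) ^ n * fracKer ((n + 1) * α + γ) (max s 0)))
      (∫ s in (0:ℝ)..x, fracKer α (x - s) * mlKer a α γ s) := by
    refine intervalIntegral.hasSum_integral_of_dominated_convergence
      (fun n _ => fracKer α x * (a ^ n * fracKer ((n + 1) * α + γ) x)) (fun n => ?_) (fun n => ?_)
      (ae_of_all _ fun _ _ => (mlKer_summable ha hα hγ hx.le).mul_left _)
      intervalIntegrable_const (ae_of_all _ fun s _ => (mlKer_hasSum ha hα hγ s).mul_left _)
    · refine Continuous.aestronglyMeasurable ?_
      have h1 := continuous_fracKer hα.le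
      have h2 := continuous_fracKer (mlKer_idx_one_lt hα hγ n).le
      fun_prop
    · refine ae_of_all _ fun s hs => ?_
      rw [Set.uIoc_of_le hx.le] at hs
      rw [norm_mul, Real.norm_of_nonneg (fracKer_nonneg (by linarith) (by linarith [hs.2]))]
      exact mul_le_mul (fracKer_mono hα.le (by linarith [hs.2]) (by linarith [hs.1]))
        (mlKer_term_norm ha hα hγ hs.2 hx.le n) (norm_nonneg _) (fracKer_nonneg (by linarith) hx.le)
  have hterm : ∀ n : ℕ, ∫ s in (0:ℝ)..x,
      fracKer α (x - s) * ((-a) ^ n * fracKer ((n + 1) * α + γ) (max s 0))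
      = (-a) ^ n * fracKer (((n + 1 : ℕ) + 1) * α + γ) x := by
    intro n
    have h := (fracKer_conv (σ := α) (τ := (n + 1) * α + γ) (x := x) (by linarith)
      (by linarith [mlKer_idx_one_lt hα hγ n]) hx).2
    rw [show ((((n + 1 : ℕ) : ℝ) + 1) * α + γ) = α + ((n + 1) * α + γ) by push_cast; ring, ← h,
      ← intervalIntegral.integral_const_mul]
    refine intervalIntegral.integral_congr fun s hs => ?_
    rw [Set.uIcc_of_le hx.le] at hs
    simp only [max_eq_left hs.1]
    ring
  simp only [hterm] at hint
  have h1 := (hasSum_nat_add_iff' 1).2 hsum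
  have h2 := hint.mul_left (-a)
  have h3 : ∀ n : ℕ, -a * ((-a) ^ n * fracKer (((n + 1 : ℕ) + 1) * α + γ) x)
    = (-a) ^ (n + 1) * fracKer (((n + 1 : ℕ) + 1) * α + γ) x := fun n => by ring
  simp only [h3] at h2
  have h4 := h1.unique h2
  simp only [Finset.range_one, Finset.sum_singleton, pow_zero, one_mul, Nat.cast_zero, zero_add] at h4
  linarith

lemma laplace_fracKer {σ s : ℝ} (hσ : 0 < σ) (hs : 0 < s) :
    IntegrableOn (fun t => Real.exp (-s * t) * fracKer σ t) (Set.Ioi 0) ∧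
    ∫ t in Set.Ioi 0, Real.exp (-s * t) * fracKer σ t = s ^ (-σ) := by
  have hG := Real.Gamma_pos_of_pos hσ
  have h : ∫ t in Set.Ioi 0, Real.exp (-s * t) * fracKer σ t = s ^ (-σ) := by
    have h1 := Real.integral_rpow_mul_exp_neg_mul_Ioi hσ hs
    have h2 : ∀ t, Real.exp (-s * t) * fracKer σ t
      = (Real.Gamma σ)⁻¹ * (t ^ (σ - 1) * Real.exp (-(s * t))) := by
      intro t; unfold fracKer; rw [neg_mul]; field_simp
    simp only [h2]
    rw [integral_const_mul, h1, one_div, Real.inv_rpow hs.le, ← Real.rpow_neg hs.le]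
    field_simp
  refine ⟨?_, h⟩
  refine Integrable.of_integral_ne_zero ?_
  rw [h]
  exact (Real.rpow_pos_of_pos hs _).ne'

/-- The Laplace transform of `k_γ`, obtained termwise as a geometric series; this needs `a < s ^ α`. -/
lemma laplace_mlKer (ha : 0 < a) (hα : 1 < α) (hγ : 0 < γ) {s : ℝ} (hs : 0 < s) (hsa : a < s ^ α) :
    IntegrableOn (fun t => Real.exp (-s * t) * mlKer a α γ t) (Set.Ioi 0) ∧
    ∫ t in Set.Ioi 0, Real.exp (-s * t) * mlKer a α γ t = s ^ (-γ) / (s ^ α + a) := by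
  have hsα := Real.rpow_pos_of_pos hs α
  have hidx : ∀ n : ℕ, 0 < ((n : ℝ) + 1) * α + γ := fun n => by
    linarith [mlKer_idx_one_lt hα hγ n]
  have hpow : ∀ n : ℕ, s ^ (-(((n : ℝ) + 1) * α + γ)) = s ^ (-γ) / s ^ α * ((s ^ α)⁻¹) ^ n := by
    intro n
    rw [← Real.rpow_neg hs.le, ← Real.rpow_mul_natCast hs.le, ← Real.rpow_sub hs,
      ← Real.rpow_add hs]
    congr 1
    ring
  have hr : |(-a) * (s ^ α)⁻¹| < 1 := by
    rw [abs_mul, abs_neg, abs_of_pos ha, abs_of_pos (inv_pos.2 hsα), ← div_eq_mul_inv,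
      div_lt_one hsα]
    exact hsa
  let F : ℕ → ℝ → ℝ := fun n t => (-a) ^ n * (Real.exp (-s * t) * fracKer ((n + 1) * α + γ) t)
  have hFi : ∀ n, Integrable (F n) (volume.restrict (Set.Ioi 0)) := fun n =>
    (laplace_fracKer (hidx n) hs).1.const_mul _
  have hFn : ∀ n, ∫ t in Set.Ioi 0, ‖F n t‖ = s ^ (-γ) / s ^ α * |(-a) * (s ^ α)⁻¹| ^ n := by
    intro n
    have : ∫ t in Set.Ioi 0, ‖F n t‖
        = ∫ t in Set.Ioi 0, a ^ n * (Real.exp (-s * t) * fracKer ((n + 1) * α + γ) t) := by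
      refine setIntegral_congr_fun measurableSet_Ioi fun t ht => ?_
      simp only [F]
      rw [norm_mul, norm_pow, norm_neg, Real.norm_of_nonneg ha.le, Real.norm_of_nonneg]
      exact mul_nonneg (Real.exp_pos _).le (fracKer_nonneg (hidx n) (le_of_lt ht))
    rw [this, integral_const_mul, (laplace_fracKer (hidx n) hs).2, hpow, abs_mul, abs_neg,
      abs_of_pos ha, abs_of_pos (inv_pos.2 hsα), mul_pow]
    ring
  have hsum := hasSum_integral_of_summable_integral_norm hFi (by
    simp only [hFn]
    exact (summable_geometric_of_lt_one (abs_nonneg _) hr).mul_left _)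
  have hval : ∀ n, ∫ t in Set.Ioi 0, F n t = s ^ (-γ) / s ^ α * ((-a) * (s ^ α)⁻¹) ^ n := by
    intro n
    simp only [F]
    rw [integral_const_mul, (laplace_fracKer (hidx n) hs).2, hpow, mul_pow]
    ring
  simp only [hval] at hsum
  have h1 := hsum.unique ((hasSum_geometric_of_norm_lt_one hr).mul_left (s ^ (-γ) / s ^ α))
  have h2 : ∫ t in Set.Ioi 0, Real.exp (-s * t) * mlKer a α γ t = s ^ (-γ) / (s ^ α + a) := by
    have : ∫ t in Set.Ioi 0, Real.exp (-s * t) * mlKer a α γ t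
        = ∫ t in Set.Ioi 0, ∑' n, F n t := by
      refine setIntegral_congr_fun measurableSet_Ioi fun t ht => ?_
      simp only [F, mlKer, max_eq_left (Set.mem_Ioi.1 ht).le]
      rw [← tsum_mul_left]
      congr 1
      ext n
      ring
    have h3 : 1 - -a * (s ^ α)⁻¹ = (s ^ α + a) / s ^ α := by field_simp; ring
    have h4 : s ^ α + a ≠ 0 := by positivity
    rw [this, h1, h3]
    field_simp
  refine ⟨Integrable.of_integral_ne_zero ?_, h2⟩
  rw [h2]
  have := Real.rpow_pos_of_pos hs (-γ)
  positivity

/-- The bounds `0 ≤ a k_γ ≤ 2 g_γ`. The functions `a k_γ` and `2 g_γ - a k_γ` have Laplace transforms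
`s ^ (-γ) ∓ s ^ (α-γ) / (s ^ α + a)`, which are `s ^ (-(γ - α/2))` times
`1 / x ∓ x / (x ^ 2 + a)` evaluated at the Bernstein function `x = s ^ (α/2)`. Both factors are
completely monotone, the first one because `γ ≥ α / 2`. -/
lemma mlKer_bounds (ha : 0 < a) (hα : 1 < α) (hα2 : α < 2) (hγ : α / 2 ≤ γ) {t : ℝ} (ht : 0 < t) :
    0 ≤ mlKer a α γ t ∧ a * mlKer a α γ t ≤ 2 * fracKer γ t := by
  have hγ0 : 0 < γ := by linarith
  set c := Real.sqrt a with hc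
  have hcc : c ^ 2 = a := Real.sq_sqrt ha.le
  -- `s ^ (-γ) + e s ^ (α-γ) / (s ^ α + a)` is completely monotone for `e = 1` and `e = -1`
  have hCM : ∀ e : ℝ, |e| = 1 → ∀ n, CMn n (fun s : ℝ => s ^ (-γ) + e * (s ^ (-γ) * (s ^ α / (s ^ α + a)))) := by
    intro e he n
    have h1 := CMn_resolvent c e he n 0
    have h2 : CMn n (fun s : ℝ => (α / 2) * s ^ (-(1 - α / 2))) :=
      CMn_rpow n (by linarith) (by linarith)
    have h3 := CMn.comp (h := fun s : ℝ => s ^ (α / 2)) (fun x hx => Real.rpow_pos_of_pos hx _)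
      (fun x hx => (Real.hasDerivAt_rpow_const (p := α / 2) (Or.inl hx.ne')).congr_deriv
        (by rw [neg_sub])) h2 h1
    have h4 : CMn n (fun s : ℝ => 1 * s ^ (-(γ - α / 2))) :=
      CMn_rpow n zero_le_one (by linarith)
    refine (h4.mul h3).congr fun s hs => ?_
    have hre : ∀ y : ℝ, (((y : ℂ) + c * Complex.I)⁻¹).re = y / (y ^ 2 + a) := by
      intro y
      rw [Complex.inv_re, Complex.normSq_add_mul_I, hcc]
      simp
    have hx := Real.rpow_pos_of_pos hs (α / 2)
    have e1 : s ^ α = (s ^ (α / 2)) ^ 2 := by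
      rw [← Real.rpow_mul_natCast hs.le]; congr 1; push_cast; ring
    have e2 : s ^ (-(γ - α / 2)) = s ^ (-γ) * s ^ (α / 2) := by
      rw [← Real.rpow_add hs]; congr 1; ring
    simp only [Nat.factorial_zero, Nat.cast_one, zero_add, pow_one, hre, one_mul, e1, e2]
    field_simp
  obtain ⟨s₀, hs₀, hs₀a⟩ : ∃ s₀ : ℝ, 0 < s₀ ∧ ∀ s ≥ s₀, a < s ^ α := by
    refine ⟨(a + 1) ^ (1 / α), by positivity, fun s hs => ?_⟩
    have : ((a + 1) ^ (1 / α)) ^ α ≤ s ^ α := Real.rpow_le_rpow (by positivity) hs (by linarith)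
    rw [← Real.rpow_mul (by positivity), one_div_mul_cancel (by linarith), Real.rpow_one] at this
    linarith
  have hkc := (continuous_mlKer (γ := γ) ha hα hγ0).continuousOn (s := Set.Ioi 0)
  have hgc : ContinuousOn (fracKer γ) (Set.Ioi 0) := fun x hx =>
    ((Real.continuousAt_rpow_const x _ (Or.inl (ne_of_gt hx))).div_const _).continuousWithinAt
  have hk : ∀ s ≥ s₀, _ := fun s hs => laplace_mlKer (γ := γ) ha hα hγ0 (hs₀.trans_le hs) (hs₀a s hs)
  have hg : ∀ s ≥ s₀, _ := fun s hs => laplace_fracKer hγ0 (hs₀.trans_le hs)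
  constructor
  · have h := nonneg_of_laplace_CM (φ := fun t => a * mlKer a α γ t) hs₀ (hCM (-1) (by simp)) ?_ ?_
      (continuousOn_const.mul hkc) t ht
    · exact nonneg_of_mul_nonneg_right h ha
    · intro s hs
      refine ((hk s hs).1.const_mul a).congr (ae_of_all _ fun t => by ring)
    · intro s hs
      have : ∀ t, Real.exp (-s * t) * (a * mlKer a α γ t) = a * (Real.exp (-s * t) * mlKer a α γ t) :=
        fun t => by ring
      simp only [this]
      rw [integral_const_mul, (hk s hs).2]
      have := Real.rpow_pos_of_pos (hs₀.trans_le hs) α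
      field_simp
      ring
  · have h := nonneg_of_laplace_CM (φ := fun t => 2 * fracKer γ t - a * mlKer a α γ t) hs₀
      (hCM 1 (by simp)) ?_ ?_ ((continuousOn_const.mul hgc).sub (continuousOn_const.mul hkc)) t ht
    · linarith
    · intro s hs
      refine (((hg s hs).1.const_mul 2).sub ((hk s hs).1.const_mul a)).congr
        (ae_of_all _ fun t => ?_)
      simp only [Pi.sub_apply]
      ring
    · intro s hs
      have : ∀ t, Real.exp (-s * t) * (2 * fracKer γ t - a * mlKer a α γ t)
          = 2 * (Real.exp (-s * t) * fracKer γ t) - a * (Real.exp (-s * t) * mlKer a α γ t) :=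
        fun t => by ring
      simp only [this]
      rw [integral_sub ((hg s hs).1.const_mul 2) ((hk s hs).1.const_mul a), integral_const_mul,
        integral_const_mul, (hk s hs).2, (hg s hs).2]
      have := Real.rpow_pos_of_pos (hs₀.trans_le hs) α
      field_simp
      ring

end ml

/-! ### Decay of the kernel by Fourier inversion -/

/-- On the right half-plane `|arg (z ^ α)| ≤ απ/2 < π`, so `z ^ α` stays in a sector that avoids the
negative axis and `z ^ α + a` is comparable in size to `|z| ^ α + a`. -/
lemma cpow_add_norm_ge {a α : ℝ} (ha : 0 < a) (hα : 1 < α) (hα2 : α < 2) :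
    ∃ c : ℝ, 0 < c ∧ ∀ z : ℂ, 0 < z.re → c * (‖z‖ ^ α + a) ≤ ‖z ^ (α : ℂ) + a‖ := by
  set k := Real.cos (α * (Real.pi / 2)) with hk
  have hpi := Real.pi_pos
  have hk1 : -1 < k := by
    have := Real.cos_lt_cos_of_nonneg_of_le_pi (x := α * (Real.pi / 2)) (y := Real.pi)
      (by positivity) le_rfl (by nlinarith)
    rwa [Real.cos_pi] at this
  have hk2 : k ≤ 1 := Real.cos_le_one _
  refine ⟨Real.sqrt ((1 + k) / 2), Real.sqrt_pos.2 (by linarith), fun z hz => ?_⟩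
  have hρ : 0 ≤ ‖z‖ ^ α := by positivity
  rw [Complex.cpow_ofReal]
  set ρ := ‖z‖ ^ α
  have harg : |z.arg| ≤ Real.pi / 2 := Complex.abs_arg_le_pi_div_two_iff.2 hz.le
  have hcos : k ≤ Real.cos (z.arg * α) := by
    rw [← Real.cos_abs (z.arg * α), abs_mul, abs_of_pos (by linarith : 0 < α), mul_comm]
    exact Real.cos_le_cos_of_nonneg_of_le_pi (by positivity) (by nlinarith) (by gcongr)
  set φ := z.arg * α
  have hn : ‖(ρ : ℂ) * (Real.cos φ + Real.sin φ * Complex.I) + a‖ ^ 2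
      = ρ ^ 2 + 2 * a * ρ * Real.cos φ + a ^ 2 := by
    rw [← Complex.normSq_eq_norm_sq, Complex.normSq_apply]
    simp only [Complex.add_re, Complex.mul_re, Complex.ofReal_re, Complex.ofReal_im, Complex.I_re,
      Complex.I_im, Complex.add_im, Complex.mul_im]
    nlinarith [Real.sin_sq_add_cos_sq φ]
  refine le_of_sq_le_sq ?_ (norm_nonneg _)
  rw [hn, mul_pow, Real.sq_sqrt (by linarith)]
  have h1 : 2 * a * ρ * k ≤ 2 * a * ρ * Real.cos φ := by gcongr
  nlinarith [mul_nonneg (by linarith : 0 ≤ 1 - k) (sq_nonneg (ρ - a))]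

/-- The derivative of the symbol `z ^ μ / (z ^ α + a)`. -/
noncomputable def symDeriv (a α μ : ℝ) (z : ℂ) : ℂ :=
  ((μ : ℂ) * z ^ ((μ : ℂ) - 1) * (z ^ (α : ℂ) + a)
    - z ^ (μ : ℂ) * ((α : ℂ) * z ^ ((α : ℂ) - 1))) / (z ^ (α : ℂ) + a) ^ 2

lemma cpow_add_ne_zero {a α : ℝ} (ha : 0 < a) (hα : 1 < α) (hα2 : α < 2) {z : ℂ} (hz : 0 < z.re) :
    z ^ (α : ℂ) + a ≠ 0 := by
  obtain ⟨c, hc, h⟩ := cpow_add_norm_ge ha hα hα2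
  intro h0
  have := h z hz
  rw [h0, norm_zero] at this
  have : 0 < c * (‖z‖ ^ α + a) := by positivity
  linarith

lemma hasDerivAt_symbol {a α : ℝ} (μ : ℝ) (ha : 0 < a) (hα : 1 < α) (hα2 : α < 2) {z : ℂ}
    (hz : 0 < z.re) :
    HasDerivAt (fun z : ℂ => z ^ (μ : ℂ) / (z ^ (α : ℂ) + a)) (symDeriv a α μ z) z := by
  have hs : z ∈ Complex.slitPlane := Or.inl hz
  have h1 := (hasDerivAt_id z).cpow_const (c := (μ : ℂ)) hs
  have h2 := ((hasDerivAt_id z).cpow_const (c := (α : ℂ)) hs).add_const (a : ℂ)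
  refine (h1.div h2 (cpow_add_ne_zero ha hα hα2 hz)).congr_deriv ?_
  simp [symDeriv]

lemma symDeriv_bound {a α μ : ℝ} (ha : 0 < a) (hα : 1 < α) (hα2 : α < 2) (hμ : 0 < μ) :
    ∃ C : ℝ, 0 < C ∧ ∀ z : ℂ, 0 < z.re →
      ‖symDeriv a α μ z‖ ≤ C * (‖z‖ ^ (μ - 1) / (‖z‖ ^ α + a)) := by
  obtain ⟨c, hc, h⟩ := cpow_add_norm_ge ha hα hα2
  refine ⟨μ / c + α / c ^ 2, by positivity, fun z hz => ?_⟩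
  have hz0 : z ≠ 0 := by rintro rfl; simp at hz
  have hr : 0 < ‖z‖ := norm_pos_iff.2 hz0
  have hge := h z hz
  have hne := cpow_add_ne_zero ha hα hα2 hz
  have hP : 0 < ‖z‖ ^ (μ - 1) := by positivity
  have hR : 0 < ‖z‖ ^ α := by positivity
  have n1 : ‖z ^ ((μ : ℂ) - 1)‖ = ‖z‖ ^ (μ - 1) := by
    have := Complex.norm_cpow_real z (μ - 1); push_cast at this; exact this
  have n2 : ‖z ^ (μ : ℂ)‖ * ‖z ^ ((α : ℂ) - 1)‖ = ‖z‖ ^ (μ - 1) * ‖z‖ ^ α := by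
    have := Complex.norm_cpow_real z (α - 1); push_cast at this
    rw [Complex.norm_cpow_real, this, ← Real.rpow_add hr, ← Real.rpow_add hr]
    ring_nf
  have hD : symDeriv a α μ z = (μ : ℂ) * z ^ ((μ : ℂ) - 1) / (z ^ (α : ℂ) + a)
      - z ^ (μ : ℂ) * ((α : ℂ) * z ^ ((α : ℂ) - 1)) / (z ^ (α : ℂ) + a) ^ 2 := by
    unfold symDeriv; field_simp
  set N := ‖z ^ (α : ℂ) + a‖ with hN
  have hNpos : 0 < N := norm_pos_iff.2 hne
  set R := ‖z‖ ^ α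
  set P := ‖z‖ ^ (μ - 1)
  rw [hD]
  refine (norm_sub_le _ _).trans ?_
  have e1 : ‖(μ : ℂ) * z ^ ((μ : ℂ) - 1) / (z ^ (α : ℂ) + a)‖ = μ * P / N := by
    rw [norm_div, norm_mul, n1, Complex.norm_real, Real.norm_of_nonneg hμ.le]
  have e2 : ‖z ^ (μ : ℂ) * ((α : ℂ) * z ^ ((α : ℂ) - 1)) / (z ^ (α : ℂ) + a) ^ 2‖
      = α * (P * R) / N ^ 2 := by
    rw [norm_div, norm_mul, norm_mul, norm_pow, ← n2, Complex.norm_real,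
      Real.norm_of_nonneg (by linarith : 0 ≤ α)]
    ring
  rw [e1, e2]
  have i1 : μ * P / N ≤ μ * P / (c * (R + a)) := by gcongr
  have i2 : α * (P * R) / N ^ 2 ≤ α * (P * (R + a)) / (c * (R + a)) ^ 2 := by
    gcongr; linarith
  calc _ ≤ μ * P / (c * (R + a)) + α * (P * (R + a)) / (c * (R + a)) ^ 2 := add_le_add i1 i2
    _ = _ := by
      have : R + a ≠ 0 := by positivity
      field_simp

lemma mul_fracKer {γ t : ℝ} (hγ : 0 < γ) (ht : 0 < t) :
    t * fracKer γ t = γ * fracKer (γ + 1) t := by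
  unfold fracKer
  rw [Real.Gamma_add_one hγ.ne', show γ + 1 - 1 = (γ - 1) + 1 by ring, Real.rpow_add_one ht.ne']
  have := Real.Gamma_pos_of_pos hγ
  field_simp

/-- Differentiation under the Laplace integral for a function dominated by `g_γ`. -/
lemma hasDerivAt_laplace {m : ℝ → ℝ} {γ : ℝ} (hγ : 0 < γ) (hm : Measurable m)
    (hb : ∀ t > 0, |m t| ≤ fracKer γ t) {z : ℂ} (hz : 0 < z.re) :
    Integrable (fun t : ℝ => -(t : ℂ) * Complex.exp (-z * t) * m t)
      (volume.restrict (Set.Ioi 0)) ∧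
    HasDerivAt (fun z : ℂ => ∫ t in Set.Ioi (0:ℝ), Complex.exp (-z * t) * m t)
      (∫ t in Set.Ioi (0:ℝ), -(t : ℂ) * Complex.exp (-z * t) * m t) z := by
  have hnorm : ∀ (y : ℂ) (t : ℝ), ‖Complex.exp (-y * t)‖ = Real.exp (-y.re * t) := by
    intro y t; rw [Complex.norm_exp]; simp
  refine hasDerivAt_integral_of_dominated_loc_of_deriv_le
    (F := fun (z : ℂ) (t : ℝ) => Complex.exp (-z * t) * (m t : ℂ))
    (F' := fun (z : ℂ) (t : ℝ) => -(t : ℂ) * Complex.exp (-z * t) * (m t : ℂ))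
    (s := {y : ℂ | z.re / 2 < y.re})
    (bound := fun t => γ * (Real.exp (-(z.re / 2) * t) * fracKer (γ + 1) t))
    ?_ ?_ ?_ ?_ ?_ ?_ ?_
  · exact (isOpen_lt continuous_const Complex.continuous_re).mem_nhds
      (show z.re / 2 < z.re by linarith)
  · exact Eventually.of_forall fun y => by fun_prop
  · refine (laplace_fracKer hγ hz).1.mono' (by fun_prop) ?_
    refine (ae_restrict_iff' measurableSet_Ioi).2 (Eventually.of_forall fun t ht => ?_)
    rw [norm_mul, hnorm, Complex.norm_real]
    gcongr
    exact hb t ht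
  · fun_prop
  · refine (ae_restrict_iff' measurableSet_Ioi).2 (Eventually.of_forall fun t ht y hy => ?_)
    have ht : 0 < t := ht
    rw [norm_mul, norm_mul, hnorm, Complex.norm_real, norm_neg, Complex.norm_real,
      Real.norm_of_nonneg ht.le]
    calc t * Real.exp (-y.re * t) * ‖m t‖
        ≤ t * Real.exp (-(z.re / 2) * t) * fracKer γ t := by
          have hy : z.re / 2 < y.re := hy
          gcongr
          exact hb t ht
      _ = _ := by
          rw [mul_right_comm, mul_fracKer hγ ht]; ring
  · exact ((laplace_fracKer (by linarith) (by linarith)).1).const_mul γ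
  · refine Eventually.of_forall fun t y _ => ?_
    have := ((((hasDerivAt_id y).neg).mul_const (t : ℂ)).cexp).mul_const (m t : ℂ)
    refine this.congr_deriv ?_
    simp only [Pi.neg_apply, id]
    ring

/-- The boundary profile of `symDeriv` is integrable: at `0` because `μ > 0`, at infinity because
`μ < α`. -/
lemma integrable_profile {a α μ : ℝ} (ha : 0 < a) (hμ : 0 < μ) (hμα : μ < α) :
    Integrable fun x : ℝ => |x| ^ (μ - 1) / (|x| ^ α + a) := by
  have hmeas : Measurable fun x : ℝ => |x| ^ (μ - 1) / (|x| ^ α + a) := by fun_prop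
  have hpos : IntegrableOn (fun x : ℝ => |x| ^ (μ - 1) / (|x| ^ α + a)) (Set.Ioi 0) := by
    rw [← Set.Ioc_union_Ioi_eq_Ioi (zero_le_one (α := ℝ))]
    refine IntegrableOn.union ?_ ?_
    · have h1 : IntegrableOn (fun x : ℝ => x ^ (μ - 1) / a) (Set.Ioc 0 1) :=
        ((intervalIntegrable_iff_integrableOn_Ioc_of_le zero_le_one).1
          (intervalIntegral.intervalIntegrable_rpow' (by linarith))).div_const a
      refine h1.mono' hmeas.aestronglyMeasurable ((ae_restrict_iff' measurableSet_Ioc).2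
        (Eventually.of_forall fun x hx => ?_))
      have hx0 : 0 < x := hx.1
      rw [Real.norm_of_nonneg (by positivity), abs_of_pos hx0]
      gcongr
      have : 0 < x ^ α := by positivity
      linarith
    · have h1 : IntegrableOn (fun x : ℝ => x ^ (μ - 1 - α)) (Set.Ioi 1) :=
        integrableOn_Ioi_rpow_of_lt (by linarith) zero_lt_one
      refine h1.mono' hmeas.aestronglyMeasurable ((ae_restrict_iff' measurableSet_Ioi).2
        (Eventually.of_forall fun x hx => ?_))
      have hx0 : 0 < x := zero_lt_one.trans hx
      rw [Real.norm_of_nonneg (by positivity), abs_of_pos hx0, Real.rpow_sub hx0 (μ - 1)]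
      gcongr
      linarith
  have hneg : IntegrableOn (fun x : ℝ => |x| ^ (μ - 1) / (|x| ^ α + a)) (Set.Iic 0) := by
    have := IntegrableOn.comp_neg_Iio (c := 0)
      (f := fun x : ℝ => |x| ^ (μ - 1) / (|x| ^ α + a)) (by simpa using hpos)
    simp only [abs_neg] at this
    exact this.congr_set_ae Iio_ae_eq_Iic.symm
  have := hneg.union hpos
  rwa [Set.Iic_union_Ioi, integrableOn_univ] at this

/-- The Laplace transform of `g_γ - a k_γ` on the whole right half-plane. It is known for large real
`s` from `laplace_mlKer`; both sides are analytic, so the identity theorem extends it. -/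
lemma laplace_eq_symbol {a α γ : ℝ} (ha : 0 < a) (hα : 1 < α) (hα2 : α < 2) (hγ : α / 2 ≤ γ)
    {z : ℂ} (hz : 0 < z.re) :
    ∫ t in Set.Ioi (0:ℝ), Complex.exp (-z * t) * ((fracKer γ t - a * mlKer a α γ t : ℝ) : ℂ)
      = z ^ ((α - γ : ℝ) : ℂ) / (z ^ (α : ℂ) + a) := by
  have hγ0 : 0 < γ := by linarith
  have hm : Measurable fun t => fracKer γ t - a * mlKer a α γ t :=
    (measurable_fracKer γ).sub ((continuous_mlKer ha hα hγ0).measurable.const_mul a)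
  have hb : ∀ t > 0, |fracKer γ t - a * mlKer a α γ t| ≤ fracKer γ t := by
    intro t ht
    have := mlKer_bounds ha hα hα2 hγ ht
    have := mul_nonneg ha.le this.1
    rw [abs_le]; constructor <;> linarith
  have hopen : IsOpen {y : ℂ | 0 < y.re} := isOpen_lt continuous_const Complex.continuous_re
  have hconn : IsPreconnected {y : ℂ | 0 < y.re} := (convex_halfSpace_re_gt 0).isPreconnected
  have hA : AnalyticOnNhd ℂ (fun z : ℂ => ∫ t in Set.Ioi (0:ℝ), Complex.exp (-z * t) *
      ((fracKer γ t - a * mlKer a α γ t : ℝ) : ℂ)) {y : ℂ | 0 < y.re} :=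
    DifferentiableOn.analyticOnNhd (fun y hy =>
      (hasDerivAt_laplace hγ0 hm hb hy).2.differentiableAt.differentiableWithinAt) hopen
  have hB : AnalyticOnNhd ℂ (fun z : ℂ => z ^ ((α - γ : ℝ) : ℂ) / (z ^ (α : ℂ) + a))
      {y : ℂ | 0 < y.re} :=
    DifferentiableOn.analyticOnNhd (fun y hy =>
      (hasDerivAt_symbol (α - γ) ha hα hα2 hy).differentiableAt.differentiableWithinAt) hopen
  have hreal : ∀ s : ℝ, 0 < s → a < s ^ α →
      ∫ t in Set.Ioi (0:ℝ), Complex.exp (-(s : ℂ) * t) *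
        ((fracKer γ t - a * mlKer a α γ t : ℝ) : ℂ)
      = (s : ℂ) ^ ((α - γ : ℝ) : ℂ) / ((s : ℂ) ^ (α : ℂ) + a) := by
    intro s hs hsa
    have h1 := laplace_fracKer hγ0 hs
    have h2 := laplace_mlKer ha hα hγ0 hs hsa
    have h3 : ∫ t in Set.Ioi (0:ℝ), Real.exp (-s * t) * (fracKer γ t - a * mlKer a α γ t)
        = s ^ (α - γ) / (s ^ α + a) := by
      have : ∀ t, Real.exp (-s * t) * (fracKer γ t - a * mlKer a α γ t)
        = Real.exp (-s * t) * fracKer γ t - a * (Real.exp (-s * t) * mlKer a α γ t) := by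
        intro t; ring
      simp_rw [this]
      rw [integral_sub h1.1 (h2.1.const_mul a), h1.2, integral_const_mul, h2.2,
        sub_eq_add_neg α γ, Real.rpow_add hs]
      have : 0 < s ^ α := by positivity
      field_simp
      ring
    rw [← Complex.ofReal_cpow hs.le, ← Complex.ofReal_cpow hs.le, ← Complex.ofReal_add,
      ← Complex.ofReal_div, ← h3, ← integral_complex_ofReal]
    congr 1
    ext t
    push_cast
    rfl
  obtain ⟨S, hS⟩ := ((tendsto_rpow_atTop (by linarith : 0 < α)).eventually_gt_atTop a
    |>.and (eventually_gt_atTop 0)).exists_forall_of_atTop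
  refine hA.eqOn_of_preconnected_of_frequently_eq hB hconn (z₀ := ((S + 1 : ℝ) : ℂ)) ?_ ?_ hz
  · have := (hS (S + 1) (by linarith)).2
    simpa using this
  · have h1 : ∃ᶠ x : ℝ in nhdsWithin (S + 1) {S + 1}ᶜ, S ≤ x :=
      ((eventually_ge_nhds (by linarith : S < S + 1)).filter_mono nhdsWithin_le_nhds).frequently
    have h2 : Tendsto (fun x : ℝ => (x : ℂ)) (nhdsWithin (S + 1) {S + 1}ᶜ)
        (nhdsWithin ((S + 1 : ℝ) : ℂ) {((S + 1 : ℝ) : ℂ)}ᶜ) := by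
      refine tendsto_nhdsWithin_of_tendsto_nhds_of_eventually_within _
        (Complex.continuous_ofReal.continuousAt.mono_left nhdsWithin_le_nhds) ?_
      filter_upwards [self_mem_nhdsWithin] with x hx
      simpa only [Set.mem_compl_iff, Set.mem_singleton_iff, Complex.ofReal_inj] using hx
    exact h2.frequently (h1.mono fun x hx => hreal x (hS x hx).2 (hS x hx).1)

/-- `g_γ - a k_γ = O(1/t)`. With `m = g_γ - a k_γ`, the Fourier transform of `t e^{-εt} m(t)` is minus
the derivative of the symbol `z ^ (α-γ) / (z ^ α + a)` at `z = ε + 2πiω`. This is dominated,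
uniformly in `ε`, by an integrable function of `ω`, so Fourier inversion bounds `t e^{-εt} |m(t)|`
independently of `ε` and `t`; then `ε → 0`. -/
lemma mlKer_decay {a α γ : ℝ} (ha : 0 < a) (hα : 1 < α) (hα2 : α < 2) (hγ : α / 2 ≤ γ)
    (hγα : γ < α) :
    ∃ C : ℝ, 0 ≤ C ∧ ∀ t > 0, |fracKer γ t - a * mlKer a α γ t| ≤ C / t := by
  have hγ0 : 0 < γ := by linarith
  set m : ℝ → ℝ := fun t => fracKer γ t - a * mlKer a α γ t with hmdef
  have hm : Measurable m :=
    (measurable_fracKer γ).sub ((continuous_mlKer ha hα hγ0).measurable.const_mul a)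
  have hb : ∀ t > 0, |m t| ≤ fracKer γ t := by
    intro t ht
    have := mlKer_bounds ha hα hα2 hγ ht
    have := mul_nonneg ha.le this.1
    rw [abs_le]; constructor <;> simp only [hmdef] <;> linarith
  set μ := α - γ with hμ
  have hμ0 : 0 < μ := by linarith
  obtain ⟨C, hC, hbound⟩ := symDeriv_bound ha hα hα2 hμ0
  have hprof := integrable_profile ha hμ0 (show μ < α by linarith)
  set J := ∫ x : ℝ, |x| ^ (μ - 1) / (|x| ^ α + a) with hJ
  have hJ0 : 0 ≤ J := integral_nonneg fun x => by positivity
  have hD : ∀ z : ℂ, 0 < z.re →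
      ∫ t in Set.Ioi (0:ℝ), -(t : ℂ) * Complex.exp (-z * t) * m t = symDeriv a α μ z := by
    intro z hz
    refine (hasDerivAt_laplace hγ0 hm hb hz).2.unique
      ((hasDerivAt_symbol μ ha hα hα2 hz).congr_of_eventuallyEq ?_)
    filter_upwards [(isOpen_lt continuous_const Complex.continuous_re).mem_nhds hz] with y hy
    exact laplace_eq_symbol ha hα hα2 hγ hy
  have key : ∀ ε > 0, ∀ t > 0, Real.exp (-ε * t) * (t * |m t|) ≤ C * J := by
    intro ε hε t ht
    set y : ℝ → ℂ := (Set.Ioi (0:ℝ)).indicator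
      (fun s => (s : ℂ) * Complex.exp (-(ε : ℂ) * s) * m s) with hy
    have hyint : Integrable y := by
      rw [hy, integrable_indicator_iff measurableSet_Ioi]
      refine ((hasDerivAt_laplace hγ0 hm hb (z := (ε : ℂ)) (by simpa)).1.neg).congr
        (Eventually.of_forall fun s => ?_)
      simp only [Pi.neg_apply]; ring
    have hF : FourierTransform.fourier y
        = fun ω : ℝ => -symDeriv a α μ ((ε : ℂ) + 2 * Real.pi * ω * Complex.I) := by
      ext ω
      rw [← hD _ (by simpa), Real.fourier_real_eq_integral_exp_smul, ← integral_neg,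
        ← integral_indicator measurableSet_Ioi]
      congr 1
      ext s
      simp only [hy, smul_eq_mul]
      by_cases hs : s ∈ Set.Ioi (0:ℝ)
      · rw [Set.indicator_of_mem hs, Set.indicator_of_mem hs,
          show -((ε : ℂ) + 2 * Real.pi * ω * Complex.I) * s
            = ((-2 * Real.pi * s * ω : ℝ) : ℂ) * Complex.I + -(ε : ℂ) * s by push_cast; ring,
          Complex.exp_add]
        ring
      · rw [Set.indicator_of_notMem hs, Set.indicator_of_notMem hs, mul_zero]
    have hFb : ∀ ω : ℝ, ω ≠ 0 →
        ‖FourierTransform.fourier y ω‖ ≤ C * (|ω| ^ (μ - 1) / (|ω| ^ α + a)) := by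
      intro ω hω
      have hω0 : 0 < |ω| := abs_pos.2 hω
      rw [hF, norm_neg]
      refine (hbound _ (by simpa)).trans ?_
      have hle : |ω| ≤ ‖(ε : ℂ) + 2 * Real.pi * ω * Complex.I‖ := by
        refine le_trans ?_ (Complex.abs_im_le_norm _)
        have : ((ε : ℂ) + 2 * Real.pi * ω * Complex.I).im = 2 * Real.pi * ω := by simp
        rw [this, abs_mul, abs_of_pos (by positivity : 0 < 2 * Real.pi)]
        nlinarith [Real.pi_gt_three]
      have hpow := Real.rpow_le_rpow_of_nonpos hω0 hle (show μ - 1 ≤ 0 by linarith)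
      gcongr
    have hae : ∀ᵐ ω : ℝ, ‖FourierTransform.fourier y ω‖ ≤ C * (|ω| ^ (μ - 1) / (|ω| ^ α + a)) := by
      filter_upwards [compl_mem_ae_iff.2 (measure_singleton (0:ℝ))] with ω hω using hFb ω hω
    have hFint : Integrable (FourierTransform.fourier y) := by
      refine (hprof.const_mul C).mono' ?_ hae
      rw [hF]
      unfold symDeriv
      exact Measurable.aestronglyMeasurable (by fun_prop)
    have hcont : ContinuousAt y t := by
      have : ContinuousAt (fun s : ℝ => (s : ℂ) * Complex.exp (-(ε : ℂ) * s) * m s) t := by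
        have : ContinuousAt m t := by
          refine ContinuousAt.sub ?_ ((continuous_mlKer ha hα hγ0).continuousAt.const_mul a)
          exact (Real.continuousAt_rpow_const _ _ (Or.inl ht.ne')).div_const _
        fun_prop
      refine this.congr ?_
      filter_upwards [Ioi_mem_nhds ht] with s hs
      rw [hy, Set.indicator_of_mem hs]
    have hinv := hyint.fourierInv_fourier_eq hFint hcont
    have hyt : ‖y t‖ = Real.exp (-ε * t) * (t * |m t|) := by
      rw [hy, Set.indicator_of_mem (show t ∈ Set.Ioi 0 from ht), norm_mul, norm_mul,
        Complex.norm_exp, Complex.norm_real, Complex.norm_real, Real.norm_of_nonneg ht.le,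
        Real.norm_eq_abs]
      simp; ring
    rw [← hyt, ← hinv, Real.fourierInv_eq]
    refine (norm_integral_le_integral_norm _).trans ?_
    simp only [Circle.norm_smul]
    rw [hJ, ← integral_const_mul]
    exact integral_mono_ae hFint.norm (hprof.const_mul C) hae
  refine ⟨C * J, by positivity, fun t ht => ?_⟩
  rw [le_div_iff₀ ht, mul_comm]
  have hlim : Tendsto (fun ε : ℝ => Real.exp (-ε * t) * (t * |m t|)) (nhdsWithin 0 (Set.Ioi 0))
      (nhds (Real.exp (-0 * t) * (t * |m t|))) :=
    (Continuous.tendsto (by fun_prop) 0).mono_left nhdsWithin_le_nhds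
  have := le_of_tendsto hlim (by
    filter_upwards [self_mem_nhdsWithin] with ε hε using key ε hε t ht)
  simpa using this

/-! ### From the Caputo equation to a Volterra equation -/

lemma rlInt_eq_cv (σ : ℝ) (f : ℝ → ℝ) (t : ℝ) : rlInt σ f t = cv (fracKer σ) f t := by
  unfold rlInt cv fracKer
  rw [← intervalIntegral.integral_const_mul]
  congr 1
  ext s
  ring

lemma cv_congr {K f g : ℝ → ℝ} {t : ℝ} (ht : 0 ≤ t) (h : ∀ s ∈ Set.Icc 0 t, f s = g s) :
    cv K f t = cv K g t := by
  refine intervalIntegral.integral_congr fun s hs => ?_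
  rw [Set.uIcc_of_le ht] at hs
  simp only [h s hs]

lemma fracKer_bdd {σ t : ℝ} (hσ : 1 ≤ σ) : ∀ x > 0, x ≤ t → |fracKer σ x| ≤ fracKer σ t := by
  intro x hx hxt
  rw [abs_of_nonneg (fracKer_nonneg (by linarith) hx.le)]
  exact fracKer_mono hσ hx.le hxt

lemma cv_fracKer_cv {σ τ t : ℝ} {f : ℝ → ℝ} (hσ : 0 < σ) (hτ : 0 < τ) (hστ : 1 ≤ σ + τ)
    (ht : 0 ≤ t) (hf : IntervalIntegrable f volume 0 t) :
    cv (fracKer σ) (cv (fracKer τ) f) t = cv (fracKer (σ + τ)) f t :=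
  cv_assoc ht (measurable_fracKer σ) (measurable_fracKer τ)
    (fun _ hx => fracKer_nonneg hσ (le_of_lt hx)) (fun _ hx => fracKer_nonneg hτ (le_of_lt hx))
    (fun _ hx _ => fracKer_conv hσ hτ hx) (fracKer_bdd hστ) hf

lemma fracKer_zero {σ : ℝ} (hσ : 1 < σ) : fracKer σ 0 = 0 := by
  unfold fracKer
  rw [Real.zero_rpow (by linarith), zero_div]

lemma cv_zero (K f : ℝ → ℝ) : cv K f 0 = 0 := by simp [cv]

/-- Dominated convergence on the fixed interval `[0, T]`, after extending the kernel by zero to the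
negative axis; `K 0 = 0` keeps the extension continuous. -/
lemma cv_continuousOn {K h : ℝ → ℝ} {T : ℝ} (hT : 0 ≤ T) (hK : Continuous K) (hK0 : K 0 = 0)
    (hh : IntervalIntegrable h volume 0 T) : ContinuousOn (cv K h) (Set.Icc 0 T) := by
  obtain ⟨B, hB⟩ := isCompact_Icc.exists_bound_of_continuousOn (hK.continuousOn (s := Set.Icc 0 T))
  have hsub : Set.uIoc 0 T = Set.Ioc 0 T := Set.uIoc_of_le hT
  have h1 : ContinuousOn (fun t => ∫ s in (0:ℝ)..T, K (max (t - s) 0) * h s) (Set.Icc 0 T) := by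
    intro t ht
    refine intervalIntegral.continuousWithinAt_of_dominated_interval
      (bound := fun s => B * ‖h s‖) ?_ ?_ ?_ ?_
    · refine Eventually.of_forall fun x => AEStronglyMeasurable.mul ?_ ?_
      · exact Continuous.aestronglyMeasurable (by fun_prop)
      · rw [hsub]; exact hh.1.aestronglyMeasurable
    · filter_upwards [self_mem_nhdsWithin] with x hx
      refine Eventually.of_forall fun s hs => ?_
      rw [hsub] at hs
      rw [norm_mul]
      gcongr
      exact hB _ ⟨le_max_right _ _, max_le (by linarith [hx.2, hs.1]) hT⟩
    · exact hh.norm.const_mul B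
    · refine Eventually.of_forall fun s _ => Continuous.continuousWithinAt (by fun_prop)
  refine h1.congr fun t ht => ?_
  have hi : IntervalIntegrable (fun s => K (max (t - s) 0) * h s) volume 0 T :=
    hh.continuousOn_mul (by fun_prop)
  have hi1 : IntervalIntegrable (fun s => K (max (t - s) 0) * h s) volume 0 t :=
    hi.mono_set (by rw [Set.uIcc_of_le hT, Set.uIcc_of_le ht.1]; exact Set.Icc_subset_Icc_right ht.2)
  have hi2 : IntervalIntegrable (fun s => K (max (t - s) 0) * h s) volume t T :=
    hi.mono_set (by rw [Set.uIcc_of_le hT, Set.uIcc_of_le ht.2]; exact Set.Icc_subset_Icc_left ht.1)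
  change _ = ∫ s in (0:ℝ)..T, K (max (t - s) 0) * h s
  rw [← intervalIntegral.integral_add_adjacent_intervals hi1 hi2]
  have e2 : ∫ s in t..T, K (max (t - s) 0) * h s = 0 := by
    rw [← intervalIntegral.integral_zero (a := t) (b := T) (μ := volume) (E := ℝ)]
    refine intervalIntegral.integral_congr fun s hs => ?_
    rw [Set.uIcc_of_le ht.2] at hs
    simp [max_eq_right (show t - s ≤ 0 by linarith [hs.1]), hK0]
  rw [e2, add_zero]
  refine intervalIntegral.integral_congr fun s hs => ?_
  rw [Set.uIcc_of_le ht.1] at hs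
  simp only [max_eq_left (show 0 ≤ t - s by linarith [hs.2])]

lemma eq_zero_of_integral_eq_zero {φ : ℝ → ℝ} {T : ℝ} (hφ : ContinuousOn φ (Set.Icc 0 T))
    (h : ∀ t ∈ Set.Icc 0 T, ∫ s in (0:ℝ)..t, φ s = 0) {t : ℝ} (ht : t ∈ Set.Ioo 0 T) :
    φ t = 0 := by
  have hd : HasDerivAt (fun t => ∫ s in (0:ℝ)..t, φ s) (φ t) t := by
    refine intervalIntegral.integral_hasDerivAt_right ?_ ?_ ?_
    · refine ContinuousOn.intervalIntegrable (hφ.mono ?_)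
      rw [Set.uIcc_of_le ht.1.le]; exact Set.Icc_subset_Icc_right ht.2.le
    · exact (hφ.mono Set.Ioo_subset_Icc_self).stronglyMeasurableAtFilter isOpen_Ioo t ht
    · exact hφ.continuousAt (Icc_mem_nhds ht.1 ht.2)
  refine hd.unique ((hasDerivAt_const t (0:ℝ)).congr_of_eventuallyEq ?_)
  filter_upwards [Icc_mem_nhds ht.1 ht.2] with s hs using h s hs

/-- If `u(0) = u'(0) = 0`, then `g_σ * u` has zero derivative at `0`, because `|u s| ≤ |s|` near `0`
gives `(g_σ * u)(t) = O(t ^ (σ + 1))`. -/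
lemma deriv_rlInt_zero {σ : ℝ} {u : ℝ → ℝ} (hσ : 0 < σ) (hu : HasDerivAt u 0 0) (hu0 : u 0 = 0)
    (hd : DifferentiableAt ℝ (cv (fracKer σ) u) 0) : deriv (cv (fracKer σ) u) 0 = 0 := by
  have h1 : Tendsto (slope (cv (fracKer σ) u) 0) (nhdsWithin 0 (Set.Ioi 0))
      (nhds (deriv (cv (fracKer σ) u) 0)) :=
    (hasDerivAt_iff_tendsto_slope.1 hd.hasDerivAt).mono_left
      (nhdsWithin_mono _ fun x hx => (Set.mem_Ioi.1 hx).ne')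
  refine tendsto_nhds_unique h1 ?_
  have hsmall : ∀ᶠ s in nhds (0:ℝ), |u s| ≤ |s| := by
    have := (hasDerivAt_iff_isLittleO.1 hu).bound (c := 1) one_pos
    simpa [hu0] using this
  obtain ⟨δ, hδ, hball⟩ := Metric.eventually_nhds_iff.1 hsmall
  have h0 : Tendsto (fracKer (σ + 1)) (nhdsWithin 0 (Set.Ioi 0)) (nhds 0) := by
    have := (continuous_fracKer (by linarith : 1 ≤ σ + 1)).tendsto 0
    rw [fracKer_zero (by linarith)] at this
    exact this.mono_left nhdsWithin_le_nhds
  refine squeeze_zero_norm' ?_ h0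
  filter_upwards [Ioo_mem_nhdsGT hδ] with t ht
  have ht0 : 0 < t := ht.1
  have hconv := fracKer_conv hσ one_pos ht0
  simp only [fracKer_one, mul_one] at hconv
  rw [slope_def_field, cv_zero, sub_zero, sub_zero, norm_div, Real.norm_of_nonneg ht0.le,
    div_le_iff₀ ht0]
  calc ‖cv (fracKer σ) u t‖ ≤ ∫ s in (0:ℝ)..t, fracKer σ (t - s) * t := by
        refine intervalIntegral.norm_integral_le_of_norm_le ht0.le ?_ (hconv.1.mul_const t)
        refine Eventually.of_forall fun s hs => ?_
        have hk := fracKer_nonneg hσ (show 0 ≤ t - s by linarith [hs.2])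
        rw [norm_mul, Real.norm_of_nonneg hk]
        gcongr
        have := hball (y := s) (by rw [Real.dist_0_eq_abs, abs_of_pos hs.1]; linarith [hs.2, ht.2])
        rw [abs_of_pos hs.1] at this
        exact this.trans hs.2
    _ = fracKer (σ + 1) t * t := by rw [intervalIntegral.integral_mul_const, hconv.2]

/-- The integral form of the equation. With `u = w - w(0)`, `v = g_{2-α} * u` and `h = v''`, absolute
continuity and `v(0) = v'(0) = 0` give `v = g_2 * h`. Convolving with `g_{α-1}` yields
`g_1 * u = g_1 * (g_α * h)`, hence `u = g_α * h`; then `h = g_γ * f - a w` is inserted. -/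
lemma caputo_volterra {γ α a : ℝ} {f w : ℝ → ℝ}
    (hγ : 0 < γ) (hα1 : 1 < α) (hα2 : α < 2)
    (hf : ∀ T > (0:ℝ), IntervalIntegrable f volume 0 T)
    (hw : ContDiff ℝ 1 w)
    (hAC : ∀ T > (0:ℝ), AC2On (capKernel α w) T)
    (heq : ∀ᵐ t ∂(volume.restrict (Set.Ici (0:ℝ))), caputoD α w t + a * w t = rlInt γ f t)
    (hw' : deriv w 0 = 0) {t : ℝ} (ht : 0 < t) :
    w t + a * cv (fracKer α) w t = w 0 + cv (fracKer (α + γ)) f t := by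
  set u : ℝ → ℝ := fun s => w s - w 0 with hu
  have huc : Continuous u := by have := hw.continuous; fun_prop
  have hv : capKernel α w = cv (fracKer (2 - α)) u := by
    ext x
    rw [capKernel, if_neg hα2.ne, rlInt_eq_cv]
    simp [hw', hu]
  set v := cv (fracKer (2 - α)) u with hvdef
  rw [hv] at hAC
  set h := deriv (deriv v) with hh
  set T := t + 1 with hT
  have hTpos : 0 < T := by linarith
  obtain ⟨hd, hint, hrep⟩ := hAC T hTpos
  have hv0 : deriv v 0 = 0 := by
    refine deriv_rlInt_zero (by linarith) ?_ (by simp [hu]) (hd 0 ⟨le_rfl, hTpos.le⟩)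
    have := (hw.differentiable one_ne_zero 0).hasDerivAt.sub_const (w 0)
    rwa [hw'] at this
  have hsubint : ∀ x ∈ Set.Icc 0 T, IntervalIntegrable h volume 0 x := fun x hx =>
    hint.mono_set (by rw [Set.uIcc_of_le hTpos.le, Set.uIcc_of_le hx.1]; exact Set.Icc_subset_Icc_right hx.2)
  have hv1 : ∀ x ∈ Set.Icc 0 T, deriv v x = cv (fracKer 1) h x := by
    intro x hx
    rw [hrep x hx, hv0, zero_add]
    simp [cv, fracKer_one, hh]
  have hdc : ContinuousOn (deriv v) (Set.Icc 0 T) := by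
    have := intervalIntegral.continuousOn_primitive_interval' hint Set.left_mem_uIcc
    rw [Set.uIcc_of_le hTpos.le] at this
    refine this.congr fun x hx => ?_
    rw [hrep x hx, hv0, zero_add]
  have hv2 : ∀ x ∈ Set.Icc 0 T, v x = cv (fracKer 2) h x := by
    intro x hx
    have hsub : Set.uIcc 0 x ⊆ Set.Icc 0 T := by
      rw [Set.uIcc_of_le hx.1]; exact Set.Icc_subset_Icc_right hx.2
    have h1 := intervalIntegral.integral_eq_sub_of_hasDerivAt (f := v) (f' := deriv v) (a := 0) (b := x)
      (fun y hy => (hd y (hsub hy)).hasDerivAt) (hdc.mono hsub).intervalIntegrable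
    rw [hvdef, cv_zero, ← hvdef, sub_zero] at h1
    rw [← h1, show (2:ℝ) = 1 + 1 by norm_num,
      ← cv_fracKer_cv one_pos one_pos (by norm_num) hx.1 (hsubint x hx),
      ← cv_congr hx.1 (fun s hs => hv1 s ⟨hs.1, hs.2.trans hx.2⟩)]
    simp [cv, fracKer_one]
  have hgc : ContinuousOn (cv (fracKer α) h) (Set.Icc 0 T) :=
    cv_continuousOn hTpos.le (continuous_fracKer hα1.le) (fracKer_zero hα1) hint
  have hprim : ∀ x ∈ Set.Icc 0 T, ∫ s in (0:ℝ)..x, (u s - cv (fracKer α) h s) = 0 := by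
    intro x hx
    have hsub : Set.uIcc 0 x ⊆ Set.Icc 0 T := by
      rw [Set.uIcc_of_le hx.1]; exact Set.Icc_subset_Icc_right hx.2
    rw [intervalIntegral.integral_sub (huc.intervalIntegrable _ _)
      (hgc.mono hsub).intervalIntegrable]
    have e1 := cv_fracKer_cv (σ := α - 1) (τ := 2 - α) (by linarith) (by linarith) (by linarith)
      hx.1 (huc.intervalIntegrable 0 x)
    have e2 := cv_fracKer_cv (σ := α - 1) (τ := 2) (by linarith) (by norm_num) (by linarith)
      hx.1 (hsubint x hx)
    have e3 := cv_fracKer_cv (σ := 1) (τ := α) (by linarith) (by linarith) (by linarith)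
      hx.1 (hsubint x hx)
    rw [← hvdef, cv_congr hx.1 (fun s hs => hv2 s ⟨hs.1, hs.2.trans hx.2⟩), e2,
      show α - 1 + 2 = 1 + α by ring, ← e3, show α - 1 + (2 - α) = 1 by ring] at e1
    simp only [cv, fracKer_one, one_mul] at e1 ⊢
    linarith
  have hut := eq_zero_of_integral_eq_zero (huc.continuousOn.sub hgc) hprim
    (t := t) ⟨ht, by linarith⟩
  have hht : IntervalIntegrable h volume 0 t := hsubint t ⟨ht.le, by linarith⟩
  have hwt : IntervalIntegrable (fun s => a * w s) volume 0 t :=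
    (hw.continuous.const_mul a).intervalIntegrable _ _
  have hsum : cv (fracKer α) (cv (fracKer γ) f) t
      = cv (fracKer α) h t + a * cv (fracKer α) w t := by
    have hk : ContinuousOn (fun s => fracKer α (t - s)) (Set.uIcc 0 t) :=
      ((continuous_fracKer hα1.le).comp (by fun_prop)).continuousOn
    unfold cv
    rw [← intervalIntegral.integral_const_mul, ← intervalIntegral.integral_add
      (hht.continuousOn_mul hk) ?_]
    · refine intervalIntegral.integral_congr_ae ?_
      filter_upwards [(ae_restrict_iff' measurableSet_Ici).1 heq] with s hs hs'
      rw [Set.uIoc_of_le ht.le] at hs'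
      have := hs (le_of_lt hs'.1)
      rw [rlInt_eq_cv, caputoD, hv] at this
      unfold cv at this
      rw [← this]
      ring
    · refine (hwt.continuousOn_mul hk).congr ?_
      exact fun s _ => mul_left_comm _ _ _
  rw [cv_fracKer_cv (by linarith) hγ (by linarith) ht.le (hf t ht)] at hsum
  simp only [hu, Pi.sub_apply] at hut
  linarith

/-! ### Solution formula and lower bound -/

lemma cv_intervalIntegrable {K d : ℝ → ℝ} {t : ℝ} (hK : Continuous K)
    (hd : IntervalIntegrable d volume 0 t) :
    IntervalIntegrable (fun s => K (t - s) * d s) volume 0 t :=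
  hd.continuousOn_mul (hK.comp (by fun_prop)).continuousOn

/-- The homogeneous equation `d = -a g_α * d` has only the zero solution: iterating it gives
`|d t| ≤ M (B t) ^ n / n!` with `B = a g_α(T)`. -/
lemma volterra_unique {α a T : ℝ} {d : ℝ → ℝ} (hα : 1 < α) (ha : 0 < a)
    (hd : ContinuousOn d (Set.Icc 0 T))
    (heq : ∀ t ∈ Set.Icc 0 T, d t = -a * cv (fracKer α) d t) : ∀ t ∈ Set.Icc 0 T, d t = 0 := by
  obtain ⟨M, hM⟩ := isCompact_Icc.exists_bound_of_continuousOn hd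
  intro t ht
  have hT : 0 ≤ T := ht.1.trans ht.2
  have hα0 : 0 < α := by linarith
  set B := a * fracKer α T with hB
  have hB0 : 0 ≤ B := mul_nonneg ha.le (fracKer_nonneg hα0 hT)
  have hM0 : 0 ≤ M := (norm_nonneg _).trans (hM t ht)
  have key : ∀ n : ℕ, ∀ t ∈ Set.Icc 0 T, ‖d t‖ ≤ M * ((B * t) ^ n / n.factorial) := by
    intro n
    induction n with
    | zero => intro t ht; simpa using hM t ht
    | succ n ih =>
      intro t ht
      rw [heq t ht, norm_mul, norm_neg, Real.norm_of_nonneg ha.le]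
      have h1 : ‖cv (fracKer α) d t‖
          ≤ ∫ s in (0:ℝ)..t, fracKer α T * (M * ((B * s) ^ n / n.factorial)) := by
        refine intervalIntegral.norm_integral_le_of_norm_le ht.1 ?_
          (Continuous.intervalIntegrable (by fun_prop) _ _)
        refine Eventually.of_forall fun s hs => ?_
        have h0 : 0 ≤ t - s := by linarith [hs.2]
        rw [norm_mul, Real.norm_of_nonneg (fracKer_nonneg hα0 h0)]
        have h2 := fracKer_mono hα.le h0 (show t - s ≤ T by linarith [hs.1, ht.2])
        have h3 := ih s ⟨hs.1.le, hs.2.trans ht.2⟩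
        exact mul_le_mul h2 h3 (norm_nonneg _) (fracKer_nonneg hα0 hT)
      have h2 : ∫ s in (0:ℝ)..t, fracKer α T * (M * ((B * s) ^ n / n.factorial))
          = fracKer α T * (M * (B ^ n * (t ^ (n + 1) / (n + 1)) / n.factorial)) := by
        simp only [mul_pow, intervalIntegral.integral_const_mul, intervalIntegral.integral_div,
          integral_pow]
        simp
      calc a * ‖cv (fracKer α) d t‖
          ≤ a * (fracKer α T * (M * (B ^ n * (t ^ (n + 1) / (n + 1)) / n.factorial))) := by
            rw [← h2]; gcongr
        _ = M * ((B * t) ^ (n + 1) / (n + 1).factorial) := by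
            rw [mul_pow B t, pow_succ B, Nat.factorial_succ, hB]
            push_cast
            field_simp
  have hlim : Tendsto (fun n : ℕ => M * ((B * t) ^ n / n.factorial)) atTop (nhds (M * 0)) :=
    (FloorSemiring.tendsto_pow_div_factorial_atTop (B * t)).const_mul M
  rw [mul_zero] at hlim
  have := ge_of_tendsto' hlim fun n => key n t ht
  exact norm_le_zero_iff.1 this

lemma mlKer_zero {a α γ : ℝ} (hα : 1 < α) (hγ : 0 < γ) : mlKer a α γ 0 = 0 := by
  unfold mlKer
  have : ∀ n : ℕ, (-a) ^ n * fracKer ((n + 1) * α + γ) (max 0 0) = 0 := fun n => by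
    rw [max_self, fracKer_zero (mlKer_idx_one_lt hα hγ n), mul_zero]
  simp only [this, tsum_zero]

/-- Variation of constants: `w = w(0) (1 - a k_1) + k_γ * f`. By `mlKer_volterra` the right-hand side
solves the same Volterra equation as `w`. -/
lemma volterra_solution {γ α a w0 : ℝ} {f w : ℝ → ℝ}
    (hα1 : 1 < α) (hα2 : α < 2) (ha : 0 < a) (hγα : α / 2 ≤ γ)
    (hf : ∀ T > (0:ℝ), IntervalIntegrable f volume 0 T) (hw : Continuous w) (hw0 : w 0 = w0)
    (heq : ∀ t > 0, w t + a * cv (fracKer α) w t = w0 + cv (fracKer (α + γ)) f t)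
    {t : ℝ} (ht : 0 < t) :
    w t = w0 * (1 - a * mlKer a α 1 t) + cv (mlKer a α γ) f t := by
  have hγ : 0 < γ := by linarith
  have hk1 : Continuous (mlKer a α 1) := continuous_mlKer ha hα1 one_pos
  have hk : Continuous (mlKer a α γ) := continuous_mlKer ha hα1 hγ
  have hg : Continuous (fracKer α) := continuous_fracKer hα1.le
  set F := cv (mlKer a α γ) f with hF
  have hFc : ∀ x > 0, ContinuousOn F (Set.Icc 0 x) := fun x hx =>
    cv_continuousOn hx.le hk (mlKer_zero hα1 hγ) (hf x hx)
  set d : ℝ → ℝ := fun t => w t - (w0 * (1 - a * mlKer a α 1 t) + F t) with hd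
  have hdc : ContinuousOn d (Set.Icc 0 t) := by
    have := hFc t ht
    fun_prop
  have hd0 : ∀ x ∈ Set.Icc 0 t, d x = -a * cv (fracKer α) d x := by
    intro x hx
    rcases hx.1.eq_or_lt with rfl | hx0
    · simp [hd, hF, cv_zero, mlKer_zero hα1 one_pos, hw0]
    have hFi : IntervalIntegrable F volume 0 x := by
      refine ContinuousOn.intervalIntegrable ?_
      rw [Set.uIcc_of_le hx0.le]; exact hFc x hx0
    have i1 := cv_intervalIntegrable hg (hw.intervalIntegrable 0 x)
    have i2 := cv_intervalIntegrable hg (hk1.intervalIntegrable 0 x)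
    have i3 := cv_intervalIntegrable hg hFi
    have i0 := fracKer_conv (σ := α) (by linarith) one_pos hx0
    simp only [fracKer_one, mul_one] at i0
    have hlin : cv (fracKer α) d x = cv (fracKer α) w x
        - w0 * (fracKer (α + 1) x - a * cv (fracKer α) (mlKer a α 1) x) - cv (fracKer α) F x := by
      have : ∀ s, fracKer α (x - s) * d s = fracKer α (x - s) * w s
          - w0 * (fracKer α (x - s) - a * (fracKer α (x - s) * mlKer a α 1 s))
          - fracKer α (x - s) * F s := by
        intro s; simp only [hd]; ring
      unfold cv at *
      simp_rw [this]
      rw [intervalIntegral.integral_sub (i1.sub ((i0.1.sub (i2.const_mul a)).const_mul w0)) i3,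
        intervalIntegral.integral_sub i1 ((i0.1.sub (i2.const_mul a)).const_mul w0),
        intervalIntegral.integral_const_mul,
        intervalIntegral.integral_sub i0.1 (i2.const_mul a),
        intervalIntegral.integral_const_mul, i0.2]
    have v1 : mlKer a α 1 x + a * cv (fracKer α) (mlKer a α 1) x = fracKer (α + 1) x :=
      mlKer_volterra ha hα1 one_pos hx0
    have hK3c : Continuous fun y => (fracKer (α + γ) y - mlKer a α γ y) / a :=
      ((continuous_fracKer (by linarith)).sub hk).div_const a
    obtain ⟨B, hB⟩ := isCompact_Icc.exists_bound_of_continuousOn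
      (hK3c.continuousOn (s := Set.Icc 0 x))
    have v2 : cv (fracKer α) F x = cv (fun y => (fracKer (α + γ) y - mlKer a α γ y) / a) f x := by
      refine cv_assoc (B := B) hx0.le (measurable_fracKer α) hk.measurable
        (fun y hy => fracKer_nonneg (by linarith) (le_of_lt hy))
        (fun y hy => (mlKer_bounds ha hα1 hα2 hγα hy).1) (fun y hy _ => ?_)
        (fun y hy hyx => hB y ⟨le_of_lt hy, hyx⟩) (hf x hx0)
      refine ⟨cv_intervalIntegrable hg (hk.intervalIntegrable 0 y), ?_⟩
      rw [eq_div_iff ha.ne', ← mlKer_volterra ha hα1 hγ hy]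
      ring
    have v3 : a * cv (fun y => (fracKer (α + γ) y - mlKer a α γ y) / a) f x
        = cv (fracKer (α + γ)) f x - F x := by
      have : ∀ s, (fracKer (α + γ) (x - s) - mlKer a α γ (x - s)) / a * f s
          = a⁻¹ * (fracKer (α + γ) (x - s) * f s - mlKer a α γ (x - s) * f s) := by
        intro s; field_simp
      simp only [hF]
      unfold cv
      simp_rw [this]
      rw [intervalIntegral.integral_const_mul, intervalIntegral.integral_sub
        (cv_intervalIntegrable (continuous_fracKer (by linarith)) (hf x hx0))
        (cv_intervalIntegrable hk (hf x hx0)), mul_inv_cancel_left₀ ha.ne']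
    rw [hlin, v2]
    have := heq x hx0
    simp only [hd]
    linear_combination this + a * w0 * v1 - v3
  have := volterra_unique hα1 ha hdc hd0 t ⟨ht.le, le_rfl⟩
  simp only [hd] at this
  linarith

/-- Lemma 2.3 (iv): if γ ≥ α/2, α + γ ≤ 2 and w'(0) = 0, then liminf t^{1−γ} w(t) > 0. -/
theorem liminf_pos_iv
    (γ α p a b : ℝ) (f w : ℝ → ℝ)
    (hγ : 0 < γ) (hα1 : 1 < α) (hα2 : α < 2) (hp : 1 < p) (ha : 0 < a) (hb : 0 < b)
    (hf : ∀ T > (0:ℝ), IntervalIntegrable f volume 0 T)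
    (hw : ContDiff ℝ 1 w)
    (hw0 : ∃ t : ℝ, 0 ≤ t ∧ w t ≠ 0)
    (hAC : ∀ T > (0:ℝ), AC2On (capKernel α w) T)
    (heq : ∀ᵐ t ∂(volume.restrict (Set.Ici (0:ℝ))),
      caputoD α w t + a * w t = rlInt γ f t ∧ f t ≥ b * |w t| ^ p)
    (hγα : α / 2 ≤ γ) (hαγ : α + γ ≤ 2) (hw' : deriv w 0 = 0) :
    0 < liminf (fun t : ℝ => ((t ^ (1 - γ) * w t : ℝ) : EReal)) atTop := by
  have hvol : ∀ t > 0, w t + a * cv (fracKer α) w t = w 0 + cv (fracKer (α + γ)) f t :=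
    fun t ht => caputo_volterra hγ hα1 hα2 hf hw hAC (heq.mono fun _ h => h.1) hw' ht
  have hrep : ∀ t > 0, w t = w 0 * (1 - a * mlKer a α 1 t) + cv (mlKer a α γ) f t :=
    fun t ht => volterra_solution hα1 hα2 ha hγα hf hw.continuous rfl hvol ht
  have hk : Continuous (mlKer a α γ) := continuous_mlKer ha hα1 hγ
  have hγ1 : γ < 1 := by linarith
  have hG := Real.Gamma_pos_of_pos hγ
  obtain ⟨C₁, hC₁, hdec₁⟩ := mlKer_decay (γ := 1) ha hα1 hα2 (by linarith) hα1
  obtain ⟨C, hC, hdec⟩ := mlKer_decay (γ := γ) ha hα1 hα2 hγα (by linarith)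
  have hfw : ∀ᵐ t : ℝ, 0 ≤ t → b * |w t| ^ p ≤ f t := by
    filter_upwards [(ae_restrict_iff' measurableSet_Ici).1 heq] with t h ht using (h ht).2
  have hf0 : ∀ᵐ t : ℝ, 0 ≤ t → 0 ≤ f t := by
    filter_upwards [hfw] with t h ht
    exact le_trans (by positivity) (h ht)
  obtain ⟨t₀, ht₀, hwt₀⟩ := hw0
  set M := t₀ + 1 with hM
  have hMpos : 0 < M := by linarith
  set I := ∫ s in (0:ℝ)..M, f s with hI
  -- `f ≥ b |w| ^ p`, and the continuous function `w` does not vanish near `t₀ < M`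
  have hIpos : 0 < I := by
    have hc : Continuous fun s => b * |w s| ^ p :=
      continuous_const.mul (hw.continuous.abs.rpow_const fun _ => Or.inr (by linarith))
    have h1 : 0 < ∫ s in (0:ℝ)..M, b * |w s| ^ p :=
      intervalIntegral.integral_pos hMpos hc.continuousOn (fun s _ => by positivity)
        ⟨t₀, ⟨ht₀, by linarith⟩, by positivity⟩
    refine h1.trans_le ?_
    refine intervalIntegral.integral_mono_ae_restrict hMpos.le (hc.intervalIntegrable _ _)
      (hf M hMpos) ?_
    refine (ae_restrict_iff' measurableSet_Icc).2 ?_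
    filter_upwards [hfw] with s h hs using h hs.1
  -- In `w = w(0) (1 - a k_1) + k_γ * f` only the mass of `f` on `[0, M]` is kept; there
  -- `a k_γ(t - s) = g_γ(t - s) + O(1/t)` and `g_γ(t - s) ≥ g_γ(t)` since `γ < 1`.
  have hlow : ∀ t > 2 * M, I / (a * Real.Gamma γ) - (|w 0| * C₁ + 2 * C * I / a) * t ^ (-γ)
      ≤ t ^ (1 - γ) * w t := by
    intro t ht
    have ht0 : 0 < t := by linarith
    have htM : 0 < t - M := by linarith
    have hcv : (fracKer γ t - C / (t - M)) / a * I ≤ cv (mlKer a α γ) f t := by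
      have hint := cv_intervalIntegrable hk (hf t ht0)
      have j1 : IntervalIntegrable (fun s => mlKer a α γ (t - s) * f s) volume 0 M :=
        hint.mono_set (by rw [Set.uIcc_of_le ht0.le, Set.uIcc_of_le hMpos.le]
                          exact Set.Icc_subset_Icc_right (by linarith))
      have j2 : IntervalIntegrable (fun s => mlKer a α γ (t - s) * f s) volume M t :=
        hint.mono_set (by rw [Set.uIcc_of_le ht0.le, Set.uIcc_of_le (by linarith)]
                          exact Set.Icc_subset_Icc_left (by linarith))
      unfold cv
      rw [← intervalIntegral.integral_add_adjacent_intervals j1 j2]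
      have p2 : 0 ≤ ∫ s in M..t, mlKer a α γ (t - s) * f s := by
        rw [intervalIntegral.integral_of_le (by linarith), integral_Ioc_eq_integral_Ioo]
        refine setIntegral_nonneg_of_ae_restrict ((ae_restrict_iff' measurableSet_Ioo).2 ?_)
        filter_upwards [hf0] with s h hs
        exact mul_nonneg (mlKer_bounds ha hα1 hα2 hγα (by linarith [hs.2])).1
          (h (by linarith [hs.1]))
      have p1 : (fracKer γ t - C / (t - M)) / a * I ≤ ∫ s in (0:ℝ)..M, mlKer a α γ (t - s) * f s := by
        rw [hI, ← intervalIntegral.integral_const_mul]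
        refine intervalIntegral.integral_mono_ae_restrict hMpos.le ((hf M hMpos).const_mul _) j1 ?_
        refine (ae_restrict_iff' measurableSet_Icc).2 ?_
        filter_upwards [hf0] with s h hs
        refine mul_le_mul_of_nonneg_right ?_ (h hs.1)
        have hts : 0 < t - s := by linarith [hs.2]
        have q1 := (abs_le.1 (hdec (t - s) hts)).2
        have q2 : C / (t - s) ≤ C / (t - M) := by gcongr; exact hs.2
        have q3 : fracKer γ t ≤ fracKer γ (t - s) := by
          unfold fracKer
          have := Real.rpow_le_rpow_of_nonpos hts (show t - s ≤ t by linarith [hs.1])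
            (show γ - 1 ≤ 0 by linarith)
          gcongr
        rw [div_le_iff₀ ha]
        linarith
      linarith
    have hw1 : -(|w 0| * (C₁ / t)) ≤ w 0 * (1 - a * mlKer a α 1 t) := by
      have := hdec₁ t ht0
      rw [fracKer_one] at this
      refine (abs_le.1 ?_).1
      rw [abs_mul]
      gcongr
    have hwlow : (fracKer γ t - 2 * C / t) / a * I - |w 0| * (C₁ / t) ≤ w t := by
      -- `t > 2 M` gives `t - M > t / 2`
      have q : C / (t - M) ≤ 2 * C / t := by
        rw [div_le_div_iff₀ htM ht0]; nlinarith
      have : (fracKer γ t - 2 * C / t) / a * I ≤ (fracKer γ t - C / (t - M)) / a * I := by gcongr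
      rw [hrep t ht0]
      linarith
    have hpow : 0 < t ^ (1 - γ) := by positivity
    refine le_trans (le_of_eq ?_) (mul_le_mul_of_nonneg_left hwlow hpow.le)
    have r1 : t ^ (-γ) = t ^ (1 - γ) / t := by
      rw [← Real.rpow_sub_one ht0.ne']; ring_nf
    have r2 : t ^ (1 - γ) * fracKer γ t = 1 / Real.Gamma γ := by
      unfold fracKer
      rw [← mul_div_assoc, ← Real.rpow_add ht0]; simp
    rw [r1]
    have : I / (a * Real.Gamma γ) = (t ^ (1 - γ) * fracKer γ t) / a * I := by
      rw [r2]; field_simp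
    rw [this]
    field_simp
    ring
  have hlim : Tendsto (fun t : ℝ => I / (a * Real.Gamma γ)
      - (|w 0| * C₁ + 2 * C * I / a) * t ^ (-γ)) atTop (nhds (I / (a * Real.Gamma γ) -
        (|w 0| * C₁ + 2 * C * I / a) * 0)) :=
    tendsto_const_nhds.sub ((tendsto_rpow_neg_atTop hγ).const_mul _)
  rw [mul_zero, sub_zero] at hlim
  have hδ : 0 < I / (a * Real.Gamma γ) := by positivity
  have hev : ∀ᶠ t : ℝ in atTop, I / (a * Real.Gamma γ) / 2 ≤ t ^ (1 - γ) * w t := by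
    filter_upwards [hlim.eventually_const_le (half_lt_self hδ), eventually_gt_atTop (2 * M)]
      with t h1 h2 using h1.trans (hlow t h2)
  have hfin : ((I / (a * Real.Gamma γ) / 2 : ℝ) : EReal)
      ≤ liminf (fun t : ℝ => ((t ^ (1 - γ) * w t : ℝ) : EReal)) atTop := by
    refine le_liminf_of_le (by isBoundedDefault) ?_
    filter_upwards [hev] with t h using EReal.coe_le_coe_iff.2 h
  exact lt_of_lt_of_le (EReal.coe_pos.2 (half_pos hδ)) hfin
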